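/- Let V be an irreducible integrable 𝔏(A)-module with finite-dimensional weight spaces on which the affine center K⊗1 acts trivially, and M its highest weight space. Then there exists a cofinite ideal R of A such that (Vir⊗R)·M = 0. -/

import Mathlib

noncomputable section

/-!
Common setup: a realization of the loop affine-Virasoro algebra
`𝔏(A) = ((g̊ ⊗ ℂ[t,t⁻¹] ⊕ ℂK) ⋊ Vir) ⊗ A`.

* `g` plays the role of the finite dimensional simple Lie algebra `g̊`.
* `A` is a commutative associative unital `ℂ`-algebra.
* `L` plays the role of `𝔏(A)`; the structure fields record the generators
  `E n x a = (x ⊗ tⁿ) ⊗ a`, `D n a = dₙ ⊗ a`, `K a = K ⊗ a`, `C a = C ⊗ a`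
  together with the defining bracket relations, and the fact that the
  generators span `L`.
-/

/-- An ideal of a `ℂ`-algebra is cofinite if the quotient is finite dimensional. -/
def IsCofiniteIdeal {A : Type*} [CommRing A] [Algebra ℂ A] (I : Ideal A) : Prop :=
  FiniteDimensional ℂ (A ⧸ I)

/-- A realization of the loop affine-Virasoro algebra `𝔏(A)`. -/
structure LoopAffVir (g : Type*) [LieRing g] [LieAlgebra ℂ g]
    (A : Type*) [CommRing A] [Algebra ℂ A]
    (L : Type*) [LieRing L] [LieAlgebra ℂ L] : Type _ where
  /-- the Cartan subalgebra `h̊` of `g̊` -/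
  H : LieSubalgebra ℂ g
  isCartan : H.IsCartanSubalgebra
  /-- the invariant nondegenerate symmetric bilinear form on `g̊` -/
  form : g →ₗ[ℂ] g →ₗ[ℂ] ℂ
  form_symm : ∀ x y : g, form x y = form y x
  form_nondeg : ∀ x : g, (∀ y : g, form x y = 0) → x = 0
  form_invariant : ∀ x y z : g, form ⁅x, y⁆ z = form x ⁅y, z⁆
  /-- the root space `g̊_α` -/
  rootSp : Module.Dual ℂ H → Submodule ℂ g
  rootSp_def : ∀ (α : Module.Dual ℂ H) (x : g),
      x ∈ rootSp α ↔ ∀ h : H, ⁅(h : g), x⁆ = α h • x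
  /-- a choice of positive roots `Δ̊₊` -/
  Δplus : Set (Module.Dual ℂ H)
  Δplus_root : ∀ α ∈ Δplus, α ≠ 0 ∧ rootSp α ≠ ⊥
  Δplus_cover : ∀ α : Module.Dual ℂ H, α ≠ 0 → rootSp α ≠ ⊥ → α ∈ Δplus ∨ -α ∈ Δplus
  Δplus_disj : ∀ α ∈ Δplus, -α ∉ Δplus
  /-- `E n x a = (x ⊗ tⁿ) ⊗ a` -/
  E : ℤ → g →ₗ[ℂ] A →ₗ[ℂ] L
  /-- `D n a = dₙ ⊗ a` -/
  D : ℤ → A →ₗ[ℂ] L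
  /-- `K a = K ⊗ a` (affine center) -/
  K : A →ₗ[ℂ] L
  /-- `C a = C ⊗ a` (Virasoro center) -/
  C : A →ₗ[ℂ] L
  lie_EE : ∀ (n m : ℤ) (x y : g) (a b : A),
      ⁅E n x a, E m y b⁆ = E (n + m) ⁅x, y⁆ (a * b)
        + (if m = -n then (n : ℂ) * form x y else 0) • K (a * b)
  lie_DE : ∀ (n m : ℤ) (x : g) (a b : A),
      ⁅D n a, E m x b⁆ = (m : ℂ) • E (m + n) x (a * b)
  lie_DD : ∀ (n m : ℤ) (a b : A),
      ⁅D n a, D m b⁆ = ((m : ℂ) - (n : ℂ)) • D (n + m) (a * b)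
        + (if m = -n then (((n : ℂ) ^ 3 - (n : ℂ)) / 12) else 0) • C (a * b)
  K_central : ∀ (a : A) (z : L), ⁅K a, z⁆ = 0
  C_central : ∀ (a : A) (z : L), ⁅C a, z⁆ = 0
  span_top : Submodule.span ℂ
      ({z : L | ∃ (n : ℤ) (x : g) (a : A), z = E n x a}
        ∪ {z : L | ∃ (n : ℤ) (a : A), z = D n a}
        ∪ {z : L | ∃ a : A, z = K a}
        ∪ {z : L | ∃ a : A, z = C a}) = ⊤

namespace LoopAffVir

variable {g A L : Type*} [LieRing g] [LieAlgebra ℂ g] [CommRing A] [Algebra ℂ A]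
  [LieRing L] [LieAlgebra ℂ L] (S : LoopAffVir g A L)

/-- Generators of the Cartan subalgebra `h̄ = h̊ ⊕ ℂK ⊕ ℂd₀ ⊕ ℂC ⊆ 𝔏 ⊗ 1`. -/
def cartanSet : Set L :=
  {z : L | ∃ h ∈ S.H, z = S.E 0 h 1} ∪ {S.K 1, S.D 0 1, S.C 1}

/-- The Cartan subalgebra `h̄` of `𝔏(A)`. -/
def cartan : Submodule ℂ L := Submodule.span ℂ S.cartanSet

/-- `h ∈ h̊` as an element of `h̄`. -/
def eH (h : S.H) : S.cartan :=
  ⟨S.E 0 h 1, Submodule.subset_span (Set.mem_union_left _ ⟨(h : g), h.2, rfl⟩)⟩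

/-- `K ⊗ 1` as an element of `h̄`. -/
def K1 : S.cartan :=
  ⟨S.K 1, Submodule.subset_span (Set.mem_union_right _ (by simp))⟩

/-- `d₀ ⊗ 1` as an element of `h̄`. -/
def d0 : S.cartan :=
  ⟨S.D 0 1, Submodule.subset_span (Set.mem_union_right _ (by simp))⟩

/-- `C ⊗ 1` as an element of `h̄`. -/
def C1 : S.cartan :=
  ⟨S.C 1, Submodule.subset_span (Set.mem_union_right _ (by simp))⟩

variable (V : Type*) [AddCommGroup V] [Module ℂ V] [LieRingModule L V] [LieModule ℂ L V]

/-- The weight space of an `𝔏(A)`-module attached to `χ ∈ h̄*`. -/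
def wtSpace (χ : Module.Dual ℂ S.cartan) : Submodule ℂ V where
  carrier := {v : V | ∀ h : S.cartan, ⁅(h : L), v⁆ = χ h • v}
  add_mem' := by
    intro a b ha hb h
    rw [lie_add, ha h, hb h, smul_add]
  zero_mem' := by
    intro h
    rw [lie_zero, smul_zero]
  smul_mem' := by
    intro c v hv h
    rw [lie_smul, hv h, smul_comm]

/-- The set of weights `P(V)`. -/
def weights : Set (Module.Dual ℂ S.cartan) := {χ | S.wtSpace V χ ≠ ⊥}

/-- `V` is a weight module: it is the (direct) sum of its weight spaces. -/
def IsWeightModule : Prop := (⨆ χ : Module.Dual ℂ S.cartan, S.wtSpace V χ) = ⊤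

/-- All weight spaces are finite dimensional. -/
def HasFinDimWeightSpaces : Prop :=
  ∀ χ : Module.Dual ℂ S.cartan, FiniteDimensional ℂ (S.wtSpace V χ)

/-- Integrability: `V` is a weight module with finite dimensional weight spaces on which all
real root vectors `(x ⊗ tⁿ) ⊗ a`, `x ∈ g̊_α`, `α ∈ Δ̊`, act locally nilpotently. -/
def IsIntegrable : Prop :=
  S.IsWeightModule V ∧ S.HasFinDimWeightSpaces V ∧
    ∀ α : Module.Dual ℂ S.H, α ≠ 0 → S.rootSp α ≠ ⊥ →
      ∀ x ∈ S.rootSp α, ∀ (n : ℤ) (a : A) (v : V),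
        ∃ N : ℕ, ((LieModule.toEnd ℂ L V) (S.E n x a) ^ N) v = 0

/-- The highest weight space
`M = {v ∈ V : (x ⊗ tⁿ ⊗ a) v = 0 ∀ x ∈ g̊_α, α ∈ Δ̊₊, n ∈ ℤ, a ∈ A}` for the second
triangular decomposition. -/
def hwSpace : Submodule ℂ V where
  carrier := {v : V | ∀ α ∈ S.Δplus, ∀ x ∈ S.rootSp α, ∀ (n : ℤ) (a : A), ⁅S.E n x a, v⁆ = 0}
  add_mem' := by
    intro u w hu hw α hα x hx n a
    rw [lie_add, hu α hα x hx n a, hw α hα x hx n a, add_zero]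
  zero_mem' := by
    intro α hα x hx n a
    rw [lie_zero]
  smul_mem' := by
    intro t v hv α hα x hx n a
    rw [lie_smul, hv α hα x hx n a, smul_zero]

/-- Generators of `𝔏(A)⁺ = (n₊ ⊕ Vir⁺) ⊗ A` for the natural triangular decomposition. -/
def plusSet : Set L :=
  {z : L | ∃ n : ℤ, 0 < n ∧ ∃ (x : g) (a : A), z = S.E n x a} ∪
  {z : L | ∃ α ∈ S.Δplus, ∃ x ∈ S.rootSp α, ∃ a : A, z = S.E 0 x a} ∪
  {z : L | ∃ n : ℤ, 0 < n ∧ ∃ a : A, z = S.D n a}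

/-- Generators of `𝔏(A)⁻ = (n₋ ⊕ Vir⁻) ⊗ A` for the natural triangular decomposition. -/
def minusSet : Set L :=
  {z : L | ∃ n : ℤ, n < 0 ∧ ∃ (x : g) (a : A), z = S.E n x a} ∪
  {z : L | ∃ α ∈ S.Δplus, ∃ x ∈ S.rootSp (-α), ∃ a : A, z = S.E 0 x a} ∪
  {z : L | ∃ n : ℤ, n < 0 ∧ ∃ a : A, z = S.D n a}

/-- Generators of `𝔏(A)⁰ = h̄ ⊗ A`. -/
def cartanASet : Set L :=
  {z : L | ∃ h ∈ S.H, ∃ a : A, z = S.E 0 h a} ∪ {z : L | ∃ a : A, z = S.K a}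
    ∪ {z : L | ∃ a : A, z = S.D 0 a} ∪ {z : L | ∃ a : A, z = S.C a}

/-- `𝔏(A)⁰ = h̄ ⊗ A` as a subspace of `L`. -/
def cartanA : Submodule ℂ L := Submodule.span ℂ S.cartanASet

/-- `h ⊗ a`, `h ∈ h̊`, as an element of `h̄ ⊗ A`. -/
def eHA (h : S.H) (a : A) : S.cartanA :=
  ⟨S.E 0 h a, Submodule.subset_span
    (Set.mem_union_left _ (Set.mem_union_left _ (Set.mem_union_left _ ⟨(h : g), h.2, a, rfl⟩)))⟩

/-- `K ⊗ a` as an element of `h̄ ⊗ A`. -/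
def KA (a : A) : S.cartanA :=
  ⟨S.K a, Submodule.subset_span
    (Set.mem_union_left _ (Set.mem_union_left _ (Set.mem_union_right _ ⟨a, rfl⟩)))⟩

/-- `d₀ ⊗ a` as an element of `h̄ ⊗ A`. -/
def DA0 (a : A) : S.cartanA :=
  ⟨S.D 0 a, Submodule.subset_span (Set.mem_union_left _ (Set.mem_union_right _ ⟨a, rfl⟩))⟩

/-- `C ⊗ a` as an element of `h̄ ⊗ A`. -/
def CA (a : A) : S.cartanA :=
  ⟨S.C a, Submodule.subset_span (Set.mem_union_right _ ⟨a, rfl⟩)⟩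

/-- `V` is a highest weight module with highest weight `ψ : h̄ ⊗ A → ℂ` for the natural
triangular decomposition: some nonzero vector `v` is annihilated by `𝔏(A)⁺`, is a
`ψ`-eigenvector for `h̄ ⊗ A`, and generates `V`. -/
def IsHWModule (ψ : Module.Dual ℂ S.cartanA) : Prop :=
  ∃ v : V, v ≠ 0 ∧ (∀ z ∈ S.plusSet, ⁅z, v⁆ = 0) ∧
    (∀ h : S.cartanA, ⁅(h : L), v⁆ = ψ h • v) ∧
    ∀ W : LieSubmodule ℂ L V, v ∈ W → W = ⊤

/-- `(𝔏 ⊗ I) ⬝ V = 0`. -/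
def Annihilates (I : Ideal A) : Prop :=
  ∀ a ∈ I, (∀ (n : ℤ) (x : g) (v : V), ⁅S.E n x a, v⁆ = 0) ∧
    (∀ (n : ℤ) (v : V), ⁅S.D n a, v⁆ = 0) ∧
    (∀ v : V, ⁅S.K a, v⁆ = 0) ∧ (∀ v : V, ⁅S.C a, v⁆ = 0)

/-- `(𝔏₀ ⊗ R)` kills the subspace `X`, where `𝔏₀ = (h̊ ⊗ ℂ[t,t⁻¹] ⊕ ℂK) ⋊ Vir`. -/
def ZeroPartAnnOn (R : Ideal A) (X : Submodule ℂ V) : Prop :=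
  ∀ a ∈ R, ∀ v ∈ X,
    (∀ (n : ℤ) (h : g), h ∈ S.H → ⁅S.E n h a, v⁆ = 0) ∧
    (∀ n : ℤ, ⁅S.D n a, v⁆ = 0) ∧ ⁅S.K a, v⁆ = 0 ∧ ⁅S.C a, v⁆ = 0

/-- Generators of `𝔏(A)₀ = ((h̊ ⊗ ℂ[t,t⁻¹] ⊕ ℂK) ⋊ Vir) ⊗ A`. -/
def zeroPartSet : Set L :=
  {z : L | ∃ (n : ℤ) (h : g), h ∈ S.H ∧ ∃ a : A, z = S.E n h a}
    ∪ {z : L | ∃ a : A, z = S.K a}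
    ∪ {z : L | ∃ (n : ℤ) (a : A), z = S.D n a}
    ∪ {z : L | ∃ a : A, z = S.C a}

/-- Generators of `g(A) = (g̊ ⊗ ℂ[t,t⁻¹] ⊕ ℂK ⊕ ℂd₀) ⊗ A`. -/
def gASet : Set L :=
  {z : L | ∃ (n : ℤ) (x : g) (a : A), z = S.E n x a}
    ∪ {z : L | ∃ a : A, z = S.K a} ∪ {z : L | ∃ a : A, z = S.D 0 a}

/-- Generators of `(h̊ ⊗ ℂ[t,t⁻¹] ⊕ ℂK) ⊗ A`. -/
def heisSet : Set L :=
  {z : L | ∃ (n : ℤ) (h : g), h ∈ S.H ∧ ∃ a : A, z = S.E n h a}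
    ∪ {z : L | ∃ a : A, z = S.K a}

/-- The smallest subspace of `V` containing `X` and stable under the operators in `Ops`;
this models `U(⋯) ⬝ X`. -/
def opClosure (Ops : Set L) (X : Submodule ℂ V) : Submodule ℂ V :=
  sInf {N : Submodule ℂ V | X ≤ N ∧ ∀ z ∈ Ops, ∀ v ∈ N, ⁅z, v⁆ ∈ N}

/-- The reflection `λ ↦ λ - λ(b) • β` on `h̄*`. -/
def reflMap (b : S.cartan) (β : Module.Dual ℂ S.cartan) :
    Module.End ℂ (Module.Dual ℂ S.cartan) :=
  LinearMap.id - LinearMap.smulRight (Module.Dual.eval ℂ S.cartan b) β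

/-- Given `ν⁻¹ : h̊* → h̊` (inverse of the form), the coroot
`β∨ = α∨ + (2 / ⟨α,α⟩) K ∈ h̄` of the real root `β = α + nδ`. -/
def corootOf (nu : Module.Dual ℂ S.H → S.H) (α : Module.Dual ℂ S.H) : S.cartan :=
  (2 / α (nu α)) • (S.eH (nu α) + S.K1)

/-- The (affine) Weyl group `W` of `𝔏(A)`, generated by the reflections in the real
roots `β = α + nδ`, acting on `h̄*`. -/
def weylMonoid (nu : Module.Dual ℂ S.H → S.H)
    (ext : Module.Dual ℂ S.H →ₗ[ℂ] Module.Dual ℂ S.cartan)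
    (δf : Module.Dual ℂ S.cartan) :
    Submonoid (Module.End ℂ (Module.Dual ℂ S.cartan)) :=
  Submonoid.closure {w | ∃ (α : Module.Dual ℂ S.H) (n : ℤ), α ≠ 0 ∧ S.rootSp α ≠ ⊥ ∧
    w = S.reflMap (S.corootOf nu α) (ext α + (n : ℂ) • δf)}

/-- The reflection `σ_α : h ↦ h - α(h) • α∨` on `h̊`. -/
def finReflMap (nu : Module.Dual ℂ S.H → S.H) (α : Module.Dual ℂ S.H) :
    Module.End ℂ S.H :=
  LinearMap.id - LinearMap.smulRight (α : S.H →ₗ[ℂ] ℂ) ((2 / α (nu α)) • nu α)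

/-- The finite Weyl group `W̊` of `g̊`, acting on `h̊`. -/
def finWeyl (nu : Module.Dual ℂ S.H → S.H) : Submonoid (Module.End ℂ S.H) :=
  Submonoid.closure {w | ∃ α : Module.Dual ℂ S.H, α ≠ 0 ∧ S.rootSp α ≠ ⊥ ∧
    w = S.finReflMap nu α}

/-- `ℤ[W̊(θ∨)] ⊆ h̊`: the additive group generated by the `W̊`-orbit of `θ∨`. -/
def thetaOrbitSpan (nu : Module.Dual ℂ S.H → S.H) (θ : Module.Dual ℂ S.H) :
    AddSubgroup S.H :=
  AddSubgroup.closure {h | ∃ w ∈ S.finWeyl nu, h = w ((2 / θ (nu θ)) • nu θ)}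

/-- The `d₀`-eigenspace of `V` for the eigenvalue `μ`. -/
def d0Eig (μ : ℂ) : Submodule ℂ V where
  carrier := {v : V | ⁅S.D 0 1, v⁆ = μ • v}
  add_mem' := by
    intro a b ha hb
    show ⁅S.D 0 1, a + b⁆ = μ • (a + b)
    rw [lie_add, ha, hb, smul_add]
  zero_mem' := by
    show ⁅S.D 0 1, (0 : V)⁆ = μ • (0 : V)
    rw [lie_zero, smul_zero]
  smul_mem' := by
    intro c v hv
    show ⁅S.D 0 1, c • v⁆ = μ • c • v
    rw [lie_smul, hv, smul_comm]

end LoopAffVir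

end

/-!
Let `V` be irreducible and `W` a joint eigenspace of `h̊ ⊗ 1` and `d₀ ⊗ 1`; it is finite
dimensional, so for `k ≠ 0` the coefficients `a ∈ A` for which `dₖ ⊗ a` and all `x ⊗ tᵏ ⊗ a`
kill `W` form a cofinite ideal. Taking brackets shows that the annihilators in degrees `m ≠ k`
multiply into the annihilator in degree `m + k`, so high enough powers of those in degrees `±1`,
`±2` kill `W` in every nonzero degree.

If the multiplicities along the `d₀`-strings are bounded, so are the codimensions of these ideals,
and the powers can be taken uniformly. One cofinite ideal then kills a nonzero vector in all nonzero
degrees, and by irreducibility its square kills `V`.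

If the multiplicities are unbounded below, comparing dimensions gives a nonzero vector killed by
all large degrees. Local nilpotence of the real root vectors and `K ⊗ 1 = 0` force, through
`sl₂`-theory, the affine part to act trivially. So `V` is a highest weight module for `Vir ⊗ A`,
and a cofinite ideal that kills the highest weight vector in degrees `-1` and `-2` kills it in all
negative degrees. The involution `t ↦ t⁻¹` exchanges this case with the one of multiplicities
unbounded above.
-/

/-! ### Cofinite ideals -/

section Nilpotent

variable {K A : Type*} [Field K] [CommRing A] [Algebra K A]

theorem pow_finrank_eq_bot_of_isNilpotent [FiniteDimensional K A] {J : Ideal A}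
    (hJ : IsNilpotent J) : J ^ Module.finrank K A = ⊥ := by
  obtain ⟨e, he⟩ := hJ
  have hlt (n : ℕ) (hn : J ^ n ≠ ⊥) : J ^ (n + 1) < J ^ n := by
    refine lt_of_le_of_ne (Ideal.pow_le_pow_right n.le_succ) fun h => hn ?_
    have hconst (m : ℕ) : J ^ (n + m) = J ^ n := by
      induction m with
      | zero => rfl
      | succ m ih => rw [← add_assoc, pow_succ, ih, ← pow_succ, h]
    rw [← hconst e, pow_add, he, mul_zero, Ideal.zero_eq_bot]
  have hdim (n : ℕ) (hn : J ^ n ≠ ⊥) :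
      Module.finrank K ((J ^ n).restrictScalars K) + n ≤ Module.finrank K A := by
    induction n with
    | zero => exact Submodule.finrank_le _
    | succ n ih =>
      have hn' : J ^ n ≠ ⊥ := fun h => hn (le_bot_iff.1 (h ▸ Ideal.pow_le_pow_right n.le_succ))
      have := Submodule.finrank_lt_finrank_of_lt
        (show (J ^ (n + 1)).restrictScalars K < (J ^ n).restrictScalars K from hlt n hn')
      have := ih hn'
      lia
  by_contra hne
  have hzero : Module.finrank K ((J ^ Module.finrank K A).restrictScalars K) = 0 := by
    have := hdim _ hne
    lia
  exact hne ((Submodule.restrictScalars_eq_bot_iff K A A).1 (Submodule.finrank_eq_zero.1 hzero))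

theorem pow_le_of_finrank_quotient_le {Q I : Ideal A} [FiniteDimensional K (A ⧸ Q)] {e N : ℕ}
    (he : I ^ e ≤ Q) (hN : Module.finrank K (A ⧸ Q) ≤ N) : I ^ N ≤ Q := by
  have hmap (n : ℕ) : I.map (Ideal.Quotient.mk Q) ^ n = ⊥ ↔ I ^ n ≤ Q := by
    rw [← Ideal.map_pow, Ideal.map_eq_bot_iff_le_ker, Ideal.mk_ker]
  exact (Ideal.pow_le_pow_right hN).trans
    ((hmap _).1 (pow_finrank_eq_bot_of_isNilpotent ⟨e, (hmap e).2 he⟩))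

end Nilpotent

theorem isCofiniteIdeal_iff_exists_fg {A : Type*} [CommRing A] [Algebra ℂ A] {I : Ideal A} :
    IsCofiniteIdeal I ↔ ∃ F : Submodule ℂ A, F.FG ∧ F ⊔ I.restrictScalars ℂ = ⊤ := by
  constructor
  · intro h
    obtain ⟨F, hF⟩ := Submodule.exists_isCompl (I.restrictScalars ℂ)
    exact ⟨F, Submodule.CoFG.fg_of_isCompl hF h, hF.symm.sup_eq_top⟩
  · rintro ⟨F, hF, h⟩
    exact Submodule.FG.cofg_of_codisjoint (T := I.restrictScalars ℂ) (codisjoint_iff.2 h) hF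

namespace IsCofiniteIdeal

variable {A : Type*} [CommRing A] [Algebra ℂ A] {I J : Ideal A}

theorem mono (h : I ≤ J) (hI : IsCofiniteIdeal I) : IsCofiniteIdeal J :=
  Submodule.CoFG.of_le (S := I.restrictScalars ℂ) (T := J.restrictScalars ℂ) h hI

theorem inf (hI : IsCofiniteIdeal I) (hJ : IsCofiniteIdeal J) : IsCofiniteIdeal (I ⊓ J) :=
  Submodule.CoFG.inf (S := I.restrictScalars ℂ) (T := J.restrictScalars ℂ) hI hJ

theorem mul [IsNoetherianRing A] (hI : IsCofiniteIdeal I) (hJ : IsCofiniteIdeal J) :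
    IsCofiniteIdeal (I * J) := by
  obtain ⟨s, hs⟩ := IsNoetherian.noetherian I
  obtain ⟨F, hF, hFI⟩ := isCofiniteIdeal_iff_exists_fg.1 hI
  obtain ⟨G, hG, hGJ⟩ := isCofiniteIdeal_iff_exists_fg.1 hJ
  refine isCofiniteIdeal_iff_exists_fg.2 ⟨F ⊔ Submodule.span ℂ (s : Set A) * G,
    hF.sup ((Submodule.fg_span s.finite_toSet).mul hG), ?_⟩
  rw [eq_top_iff, ← hFI, sup_assoc]
  refine sup_le_sup_left (fun x (hx : x ∈ I) => ?_) _
  rw [← hs, Submodule.mem_span_finset] at hx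
  obtain ⟨f, -, rfl⟩ := hx
  refine Submodule.sum_mem _ fun a ha => ?_
  obtain ⟨y, hy, z, hz, hyz⟩ := Submodule.mem_sup.1 (hGJ ▸ Submodule.mem_top : f a ∈ _)
  rw [← hyz, smul_eq_mul, mul_comm _ a, mul_add]
  exact Submodule.add_mem_sup (Submodule.mul_mem_mul (Submodule.subset_span ha) hy)
    (Ideal.mul_mem_mul (hs ▸ Submodule.subset_span ha) hz)

theorem pow [IsNoetherianRing A] (hI : IsCofiniteIdeal I) (n : ℕ) : IsCofiniteIdeal (I ^ n) := by
  induction n with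
  | zero => exact hI.mono (by simp)
  | succ n ih => exact pow_succ I n ▸ ih.mul hI

end IsCofiniteIdeal

section Trilinear

variable {K A M N P : Type*} [Field K] [CommRing A] [Algebra K A] [AddCommGroup M] [Module K M]
  [FiniteDimensional K M] [AddCommGroup N] [Module K N] [FiniteDimensional K N]
  [AddCommGroup P] [Module K P] [FiniteDimensional K P] {I : Ideal A}

theorem finiteDimensional_quotient_of_forall_mem (T : M →ₗ[K] A →ₗ[K] N →ₗ[K] P)
    (hT : ∀ a, (∀ x, T x a = 0) → a ∈ I) : FiniteDimensional K (A ⧸ I) :=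
  Submodule.CoFG.of_le (T := I.restrictScalars K)
    (fun a ha => hT a fun x => LinearMap.congr_fun (LinearMap.mem_ker.1 ha) x)
    (Submodule.CoFG.ker T.flip)

theorem finrank_quotient_le_of_forall_mem (T : M →ₗ[K] A →ₗ[K] N →ₗ[K] P)
    (hT : ∀ a, (∀ x, T x a = 0) → a ∈ I) :
    Module.finrank K (A ⧸ I) ≤
      Module.finrank K M * (Module.finrank K N * Module.finrank K P) := by
  have hle : LinearMap.ker T.flip ≤ I.restrictScalars K := fun a ha =>
    hT a fun x => LinearMap.congr_fun (LinearMap.mem_ker.1 ha) x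
  have : FiniteDimensional K (A ⧸ LinearMap.ker T.flip) := Submodule.CoFG.ker T.flip
  calc Module.finrank K (A ⧸ I)
      = Module.finrank K (A ⧸ I.restrictScalars K) :=
        (Submodule.Quotient.restrictScalarsEquiv K I).symm.finrank_eq
    _ ≤ Module.finrank K (A ⧸ LinearMap.ker T.flip) :=
        LinearMap.finrank_le_finrank_of_surjective (Submodule.factor_surjective hle)
    _ = Module.finrank K (LinearMap.range T.flip) := T.flip.quotKerEquivRange.finrank_eq
    _ ≤ Module.finrank K (M →ₗ[K] N →ₗ[K] P) := Submodule.finrank_le _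
    _ = _ := by rw [Module.finrank_linearMap, Module.finrank_linearMap]

theorem exists_ne_zero_forall_mem_apply_eq_zero {P' : Type*} [AddCommGroup P'] [Module K P']
    [FiniteDimensional K P'] {F : Submodule K A} [FiniteDimensional K F]
    (T : M →ₗ[K] A →ₗ[K] N →ₗ[K] P) (T' : M →ₗ[K] A →ₗ[K] N →ₗ[K] P')
    (h : Module.finrank K F * (Module.finrank K N * Module.finrank K P) +
      Module.finrank K F * (Module.finrank K N * Module.finrank K P') < Module.finrank K M) :
    ∃ x ≠ 0, ∀ a ∈ F, T x a = 0 ∧ T' x a = 0 := by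
  have hker : LinearMap.ker ((T.domRestrict₂ F).prod (T'.domRestrict₂ F)) ≠ ⊥ := by
    refine LinearMap.ker_ne_bot_of_finrank_lt ?_
    simpa only [Module.finrank_prod, Module.finrank_linearMap] using h
  obtain ⟨x, hx, hx0⟩ := (Submodule.ne_bot_iff _).1 hker
  rw [LinearMap.ker_prod, Submodule.mem_inf] at hx
  exact ⟨x, hx0, fun a ha => ⟨LinearMap.congr_fun hx.1 ⟨a, ha⟩, LinearMap.congr_fun hx.2 ⟨a, ha⟩⟩⟩

end Trilinear

theorem finrank_finset_sup_le_sum {K M ι : Type*} [Field K] [AddCommGroup M] [Module K M]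
    (s : Finset ι) (W : ι → Submodule K M) [∀ i, FiniteDimensional K (W i)] :
    Module.finrank K (s.sup W : Submodule K M) ≤ ∑ i ∈ s, Module.finrank K (W i) := by
  classical
  induction s using Finset.induction_on with
  | empty => rw [Finset.sup_empty, finrank_bot, Finset.sum_empty]
  | insert i s hi ih =>
    rw [Finset.sup_insert, Finset.sum_insert hi]
    exact (Submodule.finrank_add_le_finrank_add_finrank _ _).trans (Nat.add_le_add_left ih _)

theorem exists_dual_forall_eq_smul {K X M : Type*} [Field K] [AddCommGroup X] [Module K X]
    [AddCommGroup M] [Module K M] (f : X →ₗ[K] Module.End K M) {W : Submodule K M} (hW : W ≠ ⊥)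
    (h : ∀ x, ∃ s : K, ∀ w ∈ W, f x w = s • w) :
    ∃ χ : Module.Dual K X, ∀ x, ∀ w ∈ W, f x w = χ x • w := by
  obtain ⟨w, hw, hw0⟩ := (Submodule.ne_bot_iff _).1 hW
  choose s hs using h
  have hinj : Function.Injective fun r : K => r • w := smul_left_injective K hw0
  refine ⟨{ toFun := s, map_add' := fun x y => hinj ?_, map_smul' := fun r x => hinj ?_ }, hs⟩
  · simp only [add_smul, ← hs _ w hw, map_add, LinearMap.add_apply]
  · simp only [smul_eq_mul, mul_smul, RingHom.id_apply, ← hs _ w hw, map_smul,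
      LinearMap.smul_apply]

theorem span_lie_eq_top (R g : Type*) [CommRing R] [LieRing g] [LieAlgebra R g]
    [LieAlgebra.IsSimple R g] : Submodule.span R {z : g | ∃ x y : g, ⁅x, y⁆ = z} = ⊤ := by
  rcases LieAlgebra.IsSimple.eq_bot_or_eq_top (R := R) ⁅(⊤ : LieIdeal R g), (⊤ : LieIdeal R g)⁆
    with h | h
  · rw [LieSubmodule.lie_eq_bot_iff] at h
    exact absurd ⟨fun x y => h x (LieSubmodule.mem_top x) y (LieSubmodule.mem_top y)⟩
      (LieAlgebra.IsSimple.non_abelian R (L := g))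
  · rw [← LieSubmodule.toSubmodule_inj, LieSubmodule.lieIdeal_oper_eq_linear_span'] at h
    simpa using h

namespace LoopAffVir

/-! ### Homogeneous elements and their annihilators -/

section Homogeneous

variable {g A L : Type*} [LieRing g] [LieAlgebra ℂ g] [CommRing A] [Algebra ℂ A]
  [LieRing L] [LieAlgebra ℂ L] (S : LoopAffVir g A L)

/-- The general homogeneous element of degree `k` with coefficient `a`: the tuple `(x, c, κ, γ)`
stands for `(x ⊗ tᵏ + c dₖ) ⊗ a`, plus `(κ K + γ C) ⊗ a` when `k = 0`. -/
noncomputable def gen (k : ℤ) : (g × ℂ × ℂ × ℂ) →ₗ[ℂ] A →ₗ[ℂ] L :=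
  (S.E k).coprod ((LinearMap.toSpanSingleton ℂ _ (S.D k)).coprod
    (if k = 0 then
      (LinearMap.toSpanSingleton ℂ _ S.K).coprod (LinearMap.toSpanSingleton ℂ _ S.C) else 0))

theorem gen_apply (k : ℤ) (q : g × ℂ × ℂ × ℂ) (a : A) :
    S.gen k q a = S.E k q.1 a + q.2.1 • S.D k a +
      if k = 0 then q.2.2.1 • S.K a + q.2.2.2 • S.C a else 0 := by
  unfold gen
  split_ifs <;> simp [add_assoc]

theorem lie_K (z : L) (a : A) : ⁅z, S.K a⁆ = 0 := by rw [← lie_skew, S.K_central, neg_zero]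

theorem lie_C (z : L) (a : A) : ⁅z, S.C a⁆ = 0 := by rw [← lie_skew, S.C_central, neg_zero]

theorem lie_ED (n m : ℤ) (x : g) (a b : A) :
    ⁅S.E n x a, S.D m b⁆ = -(n : ℂ) • S.E (n + m) x (a * b) := by
  rw [← lie_skew, S.lie_DE, mul_comm b, neg_smul]

theorem exists_lie_gen (m n : ℤ) (p q : g × ℂ × ℂ × ℂ) :
    ∃ r, ∀ a b, ⁅S.gen m p a, S.gen n q b⁆ = S.gen (m + n) r (a * b) := by
  obtain ⟨x, c, κ, γ⟩ := p
  obtain ⟨y, d, κ', γ'⟩ := q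
  refine ⟨(⁅x, y⁆ + (c * n) • y - (d * m) • x, c * d * (n - m), m * S.form x y,
    c * d * ((m ^ 3 - m) / 12)), fun a b => ?_⟩
  have hcentral (k : ℤ) (z : L) (s t : ℂ) (a : A) :
      ⁅if k = 0 then s • S.K a + t • S.C a else 0, z⁆ = 0 ∧
        ⁅z, if k = 0 then s • S.K a + t • S.C a else 0⁆ = 0 := by
    split_ifs <;> simp [S.K_central, S.C_central, lie_K, lie_C]
  simp only [gen_apply, add_lie, lie_add, hcentral, smul_lie, lie_smul, S.lie_EE, S.lie_DE,
    S.lie_DD, lie_ED, add_comm n m, map_add, map_sub, map_smul, LinearMap.add_apply,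
    LinearMap.sub_apply, LinearMap.smul_apply, show n = -m ↔ m + n = 0 by lia]
  split_ifs <;> module

theorem span_gen : Submodule.span ℂ {z | ∃ k q a, S.gen k q a = z} = ⊤ := by
  rw [eq_top_iff, ← S.span_top]
  refine Submodule.span_mono ?_
  rintro z (((⟨k, x, a, rfl⟩ | ⟨k, a, rfl⟩) | ⟨a, rfl⟩) | ⟨a, rfl⟩)
  · exact ⟨k, (x, 0, 0, 0), a, by simp [gen_apply]⟩
  · exact ⟨k, (0, 1, 0, 0), a, by simp [gen_apply]⟩
  · exact ⟨0, (0, 0, 1, 0), a, by simp [gen_apply]⟩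
  · exact ⟨0, (0, 0, 0, 1), a, by simp [gen_apply]⟩

theorem lie_D_zero_one_gen (k : ℤ) (q : g × ℂ × ℂ × ℂ) (a : A) :
    ⁅S.D 0 1, S.gen k q a⁆ = (k : ℂ) • S.gen k q a := by
  rcases eq_or_ne k 0 with rfl | hk
  · simp [gen_apply, S.lie_DE, S.lie_DD, lie_K, lie_C]
  · simp [gen_apply, S.lie_DE, S.lie_DD, hk, smul_smul, mul_comm]

theorem exists_lie_lie_gen {V : Type*} [AddCommGroup V] [LieRingModule L V] (m n : ℤ)
    (p q : g × ℂ × ℂ × ℂ) :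
    ∃ r, ∀ a b (v : V), ⁅S.gen m p a, ⁅S.gen n q b, v⁆⁆ =
      ⁅S.gen (m + n) r (a * b), v⁆ + ⁅S.gen n q b, ⁅S.gen m p a, v⁆⁆ := by
  obtain ⟨r, hr⟩ := S.exists_lie_gen m n p q
  exact ⟨r, fun a b v => by rw [leibniz_lie, hr]⟩

end Homogeneous

section Annihilator

variable {g A L : Type*} [LieRing g] [LieAlgebra ℂ g] [CommRing A] [Algebra ℂ A]
  [LieRing L] [LieAlgebra ℂ L] (S : LoopAffVir g A L)
  {V : Type*} [AddCommGroup V] [Module ℂ V] [LieRingModule L V] [LieModule ℂ L V]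

/-- The coefficients `a` for which every homogeneous element of degree `k` with coefficient `a`
kills `v`. -/
def ann (k : ℤ) (v : V) : Submodule ℂ A where
  carrier := {a | ∀ q, ⁅S.gen k q a, v⁆ = 0}
  add_mem' ha hb q := by rw [map_add, add_lie, ha, hb, add_zero]
  zero_mem' q := by rw [map_zero, zero_lie]
  smul_mem' c a ha q := by rw [map_smul, smul_lie, ha, smul_zero]

variable {S}

theorem mem_ann {k : ℤ} {a : A} {v : V} : a ∈ S.ann k v ↔ ∀ q, ⁅S.gen k q a, v⁆ = 0 := Iff.rfl

theorem mem_ann_iff_of_ne_zero {k : ℤ} (hk : k ≠ 0) {a : A} {v : V} :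
    a ∈ S.ann k v ↔ ⁅S.D k a, v⁆ = 0 ∧ ∀ x, ⁅S.E k x a, v⁆ = 0 := by
  refine ⟨fun h => ⟨?_, fun x => ?_⟩, fun ⟨hD, hE⟩ q => ?_⟩
  · simpa [gen_apply, hk] using h (0, 1, 0, 0)
  · simpa [gen_apply, hk] using h (x, 0, 0, 0)
  · simp [gen_apply, hk, hD, hE]

theorem mem_ann_zero_iff {a : A} {v : V} :
    a ∈ S.ann 0 v ↔
      ⁅S.D 0 a, v⁆ = 0 ∧ (∀ x, ⁅S.E 0 x a, v⁆ = 0) ∧ ⁅S.K a, v⁆ = 0 ∧ ⁅S.C a, v⁆ = 0 := by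
  refine ⟨fun h => ⟨?_, fun x => ?_, ?_, ?_⟩, fun ⟨hD, hE, hK, hC⟩ q => ?_⟩
  · simpa [gen_apply] using h (0, 1, 0, 0)
  · simpa [gen_apply] using h (x, 0, 0, 0)
  · simpa [gen_apply] using h (0, 0, 1, 0)
  · simpa [gen_apply] using h (0, 0, 0, 1)
  · simp [gen_apply, hD, hE, hK, hC]

theorem annihilates_of_forall_mem_ann {R : Ideal A} (h : ∀ k, ∀ a ∈ R, ∀ v : V, a ∈ S.ann k v) :
    S.Annihilates V R := by
  refine fun a ha => ⟨fun k x v => ?_, fun k v => ?_, fun v => ?_, fun v => ?_⟩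
  · simpa [gen_apply] using h k a ha v (x, 0, 0, 0)
  · simpa [gen_apply] using h k a ha v (0, 1, 0, 0)
  · exact (mem_ann_zero_iff.1 (h 0 a ha v)).2.2.1
  · exact (mem_ann_zero_iff.1 (h 0 a ha v)).2.2.2

theorem eq_top_of_forall_lie_gen_mem [IsSimpleOrder (LieSubmodule ℂ L V)] {N : Submodule ℂ V}
    (hN : ∀ k q a, ∀ v ∈ N, ⁅S.gen k q a, v⁆ ∈ N) {v : V} (hv : v ∈ N) (hv0 : v ≠ 0) :
    N = ⊤ := by
  have hstable (z : L) (w : V) (hw : w ∈ N) : ⁅z, w⁆ ∈ N := by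
    induction (S.span_gen ▸ Submodule.mem_top : z ∈ _) using Submodule.span_induction with
    | mem z hz => obtain ⟨k, q, a, rfl⟩ := hz; exact hN k q a w hw
    | zero => rw [zero_lie]; exact N.zero_mem
    | add x y _ _ hx hy => rw [add_lie]; exact N.add_mem hx hy
    | smul c x _ hx => rw [smul_lie]; exact N.smul_mem c hx
  let P : LieSubmodule ℂ L V := { N with lie_mem := fun {z w} hw => hstable z w hw }
  have hvP : v ∈ P := hv
  have hP : P ≠ ⊥ := fun h => hv0 ((LieSubmodule.mem_bot v).1 (h ▸ hvP))
  exact congrArg LieSubmodule.toSubmodule ((eq_bot_or_eq_top P).resolve_left hP)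

theorem annihilates_of_mem_ann [IsSimpleOrder (LieSubmodule ℂ L V)] {J : Ideal A} {v : V}
    (hv : v ≠ 0) (hJ : ∀ k, ∀ a ∈ J, a ∈ S.ann k v) : S.Annihilates V J := by
  let N : Submodule ℂ V :=
    { carrier := {u | ∀ k, ∀ a ∈ J, a ∈ S.ann k u}
      add_mem' := fun hu hw k a ha q => by rw [lie_add, hu k a ha q, hw k a ha q, add_zero]
      zero_mem' := fun k a _ q => lie_zero _
      smul_mem' := fun c u hu k a ha q => by rw [lie_smul, hu k a ha q, smul_zero] }
  have hN : N = ⊤ := by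
    refine eq_top_of_forall_lie_gen_mem (S := S) (fun m p b u hu k a ha q => ?_) hJ hv
    obtain ⟨r, hr⟩ := S.exists_lie_lie_gen k m q p (V := V)
    rw [hr, hu _ _ (J.mul_mem_right b ha), hu k a ha, lie_zero, add_zero]
  exact annihilates_of_forall_mem_ann fun k a ha u => (hN ▸ Submodule.mem_top : u ∈ N) k a ha

theorem mul_mem_ann_of_mem_ann_lie_D {m k : ℤ} {a b : A} {v : V} (hk : k ≠ 0) (hmk : m ≠ k)
    (h0 : m + k ≠ 0) (hb : b ∈ S.ann k v) (hab : b ∈ S.ann k ⁅S.D m a, v⁆) :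
    a * b ∈ S.ann (m + k) v := by
  obtain ⟨hD, hE⟩ := (mem_ann_iff_of_ne_zero hk).1 hb
  obtain ⟨hD', hE'⟩ := (mem_ann_iff_of_ne_zero hk).1 hab
  refine (mem_ann_iff_of_ne_zero h0).2 ⟨?_, fun x => ?_⟩
  · have h := leibniz_lie (S.D m a) (S.D k b) v
    rw [hD, hD', lie_zero, add_zero, S.lie_DD, if_neg (by lia), zero_smul, add_zero,
      smul_lie] at h
    exact (smul_eq_zero.1 h.symm).resolve_left (sub_ne_zero.2 (by exact_mod_cast hmk.symm))
  · have h := leibniz_lie (S.D m a) (S.E k x b) v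
    rw [hE, hE', lie_zero, add_zero, S.lie_DE, smul_lie, add_comm k] at h
    exact (smul_eq_zero.1 h.symm).resolve_left (by exact_mod_cast hk)

theorem mul_mem_ann {m k : ℤ} {a b : A} {v : V} (hk : k ≠ 0) (hmk : m ≠ k) (h0 : m + k ≠ 0)
    (ha : ⁅S.D m a, v⁆ = 0) (hb : b ∈ S.ann k v) : a * b ∈ S.ann (m + k) v :=
  mul_mem_ann_of_mem_ann_lie_D hk hmk h0 hb (mem_ann.2 fun q => by rw [ha, lie_zero])

theorem lie_E_add_smul_lie_K_eq_zero {n m : ℤ} {x y : g} {a b : A} {v : V}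
    (hx : ⁅S.E m x a, v⁆ = 0) (hy : ⁅S.E (n - m) y b, v⁆ = 0) :
    ⁅S.E n ⁅x, y⁆ (a * b), v⁆ +
      (if n = 0 then (m : ℂ) * S.form x y else 0) • ⁅S.K (a * b), v⁆ = 0 := by
  have h := leibniz_lie (S.E m x a) (S.E (n - m) y b) v
  rw [hx, hy, S.lie_EE, add_lie, smul_lie, lie_zero, lie_zero, add_zero, add_sub_cancel] at h
  simpa only [sub_eq_neg_self] using h.symm

theorem form_smul_lie_K_mul_eq_zero {m m' : ℤ} (hm : m ≠ m') {a b : A} {v : V}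
    (ha : ∀ x, ⁅S.E m x a, v⁆ = 0) (hb : ∀ x, ⁅S.E (-m) x b, v⁆ = 0)
    (ha' : ∀ x, ⁅S.E m' x a, v⁆ = 0) (hb' : ∀ x, ⁅S.E (-m') x b, v⁆ = 0) (x y : g) :
    S.form x y • ⁅S.K (a * b), v⁆ = 0 := by
  -- Only the central term of `⁅x ⊗ tᵐ, y ⊗ t⁻ᵐ⁆` depends on `m`.
  have h := lie_E_add_smul_lie_K_eq_zero (n := 0) (ha x) (zero_sub m ▸ hb y)
  have h' := lie_E_add_smul_lie_K_eq_zero (n := 0) (ha' x) (zero_sub m' ▸ hb' y)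
  simp only [if_true] at h h'
  have hsub : ((m : ℂ) - m') • S.form x y • ⁅S.K (a * b), v⁆ = 0 := by
    rw [← sub_eq_zero.2 (h.trans h'.symm)]
    module
  exact (smul_eq_zero.1 hsub).resolve_left (sub_ne_zero.2 (by exact_mod_cast hm))

end Annihilator

section Perfect

variable {g A L : Type*} [LieRing g] [LieAlgebra ℂ g] [LieAlgebra.IsSimple ℂ g] [CommRing A]
  [Algebra ℂ A] [LieRing L] [LieAlgebra ℂ L] {S : LoopAffVir g A L}
  {V : Type*} [AddCommGroup V] [Module ℂ V] [LieRingModule L V] [LieModule ℂ L V]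

theorem lie_K_mul_eq_zero {m m' : ℤ} (hm : m ≠ m') {a b : A} {v : V}
    (ha : ∀ x, ⁅S.E m x a, v⁆ = 0) (hb : ∀ x, ⁅S.E (-m) x b, v⁆ = 0)
    (ha' : ∀ x, ⁅S.E m' x a, v⁆ = 0) (hb' : ∀ x, ⁅S.E (-m') x b, v⁆ = 0) :
    ⁅S.K (a * b), v⁆ = 0 := by
  by_contra hK
  refine LieAlgebra.IsSimple.non_abelian ℂ (L := g) ⟨fun x y => ?_⟩
  rw [S.form_nondeg x fun y => (smul_eq_zero.1
    (form_smul_lie_K_mul_eq_zero hm ha hb ha' hb' x y)).resolve_right hK, zero_lie]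

theorem lie_E_mul_eq_zero {n m m' : ℤ} (hm : m ≠ m') {a b : A} {v : V}
    (ha : ∀ x, ⁅S.E m x a, v⁆ = 0) (hb : ∀ x, ⁅S.E (n - m) x b, v⁆ = 0)
    (ha' : ∀ x, ⁅S.E m' x a, v⁆ = 0) (hb' : ∀ x, ⁅S.E (n - m') x b, v⁆ = 0) (z : g) :
    ⁅S.E n z (a * b), v⁆ = 0 := by
  have hbracket (x y : g) : ⁅S.E n ⁅x, y⁆ (a * b), v⁆ = 0 := by
    have h := lie_E_add_smul_lie_K_eq_zero (ha x) (hb y)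
    rcases eq_or_ne n 0 with rfl | hn
    · rwa [lie_K_mul_eq_zero hm ha (by simpa using hb) ha' (by simpa using hb'), smul_zero,
        add_zero] at h
    · rwa [if_neg hn, zero_smul, add_zero] at h
  induction (span_lie_eq_top ℂ g ▸ Submodule.mem_top : z ∈ _) using Submodule.span_induction with
  | mem z hz => obtain ⟨x, y, rfl⟩ := hz; exact hbracket x y
  | zero => simp
  | add x y _ _ hx hy => rw [map_add, LinearMap.add_apply, add_lie, hx, hy, add_zero]
  | smul c x _ hx => rw [map_smul, LinearMap.smul_apply, smul_lie, hx, smul_zero]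

theorem mul_mem_ann_zero {a b : A} {v : V} (ha : ∀ k ≠ 0, a ∈ S.ann k v)
    (hb : ∀ k ≠ 0, b ∈ S.ann k v) : a * b ∈ S.ann 0 v := by
  have hEa (k : ℤ) (hk : k ≠ 0) := ((mem_ann_iff_of_ne_zero hk).1 (ha k hk)).2
  have hEb (k : ℤ) (hk : k ≠ 0) := ((mem_ann_iff_of_ne_zero hk).1 (hb k hk)).2
  have hDC (n : ℤ) (hn : n ≠ 0) : -(2 * n : ℂ) • ⁅S.D 0 (a * b), v⁆
      + (((n : ℂ) ^ 3 - n) / 12) • ⁅S.C (a * b), v⁆ = 0 := by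
    have h := leibniz_lie (S.D n a) (S.D (-n) b) v
    rw [((mem_ann_iff_of_ne_zero hn).1 (ha n hn)).1,
      ((mem_ann_iff_of_ne_zero (neg_ne_zero.2 hn)).1 (hb _ (neg_ne_zero.2 hn))).1, S.lie_DD,
      if_pos rfl, add_neg_cancel, add_lie, smul_lie, smul_lie, lie_zero, lie_zero, add_zero] at h
    rw [h]
    push_cast
    module
  have hD : ⁅S.D 0 (a * b), v⁆ = 0 := by simpa using hDC 1 one_ne_zero
  have hC : ⁅S.C (a * b), v⁆ = 0 := by
    have h := hDC 2 two_ne_zero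
    rw [hD, smul_zero, zero_add] at h
    exact (smul_eq_zero.1 h).resolve_left (by norm_num)
  refine mem_ann_zero_iff.2 ⟨hD, lie_E_mul_eq_zero (m := 1) (m' := 2) (by decide) ?_ ?_ ?_ ?_,
    lie_K_mul_eq_zero (m := 1) (m' := 2) (by decide) ?_ ?_ ?_ ?_, hC⟩
  all_goals first | exact hEa _ (by decide) | exact hEb _ (by decide)

theorem annihilates_mul_self_of_mem_ann [IsSimpleOrder (LieSubmodule ℂ L V)] {J : Ideal A} {v : V}
    (hv : v ≠ 0) (hJ : ∀ k ≠ 0, ∀ a ∈ J, a ∈ S.ann k v) : S.Annihilates V (J * J) := by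
  refine annihilates_of_mem_ann hv fun k a ha => ?_
  rcases eq_or_ne k 0 with rfl | hk
  · refine Submodule.mul_induction_on ha (fun a ha b hb => ?_) fun a b ha hb => add_mem ha hb
    exact mul_mem_ann_zero (fun k hk => hJ k hk a ha) fun k hk => hJ k hk b hb
  · exact hJ k hk a (Ideal.mul_le_left ha)

end Perfect

end LoopAffVir

theorem exists_ne_bot_of_iSup_eq_top {R M ι : Type*} [Semiring R] [AddCommMonoid M] [Module R M]
    [Nontrivial M] {W : ι → Submodule R M} (hW : iSup W = ⊤) : ∃ i, W i ≠ ⊥ := by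
  by_contra! h
  exact bot_ne_top (α := Submodule R M) (by rw [← hW, iSup_congr h, iSup_bot])

namespace LoopAffVir

/-! ### Joint eigenspaces -/

section JointEigenspace

variable {g A L : Type*} [LieRing g] [LieAlgebra ℂ g] [CommRing A] [Algebra ℂ A]
  [LieRing L] [LieAlgebra ℂ L] (S : LoopAffVir g A L)
  {V : Type*} [AddCommGroup V] [Module ℂ V] [LieRingModule L V] [LieModule ℂ L V]

theorem lie_gen_mem_d0Eig {μ : ℂ} {v : V} (hv : v ∈ S.d0Eig V μ) (k : ℤ) (q : g × ℂ × ℂ × ℂ)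
    (a : A) : ⁅S.gen k q a, v⁆ ∈ S.d0Eig V (μ + k) := by
  change ⁅S.D 0 1, v⁆ = μ • v at hv
  change ⁅S.D 0 1, ⁅S.gen k q a, v⁆⁆ = (μ + k) • ⁅S.gen k q a, v⁆
  rw [leibniz_lie, lie_D_zero_one_gen, hv, smul_lie, lie_smul, add_smul, add_comm]

variable (V) in
/-- The subspace of `V` on which `h̊ ⊗ 1` acts through `φ` and `d₀ ⊗ 1` through `μ`. -/
def jointEig (φ : Module.Dual ℂ S.H) (μ : ℂ) : Submodule ℂ V :=
  (⨅ h : S.H, (LieModule.toEnd ℂ L V (S.E 0 h 1)).eigenspace (φ h)) ⊓ S.d0Eig V μ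

variable {S} in
theorem mem_jointEig {φ : Module.Dual ℂ S.H} {μ : ℂ} {v : V} :
    v ∈ S.jointEig V φ μ ↔ (∀ h : S.H, ⁅S.E 0 h 1, v⁆ = φ h • v) ∧ ⁅S.D 0 1, v⁆ = μ • v := by
  simp only [jointEig, Submodule.mem_inf, Submodule.mem_iInf, Module.End.mem_eigenspace_iff,
    LieModule.toEnd_apply_apply]
  rfl

theorem lie_E_mem_jointEig {α φ : Module.Dual ℂ S.H} {μ : ℂ} {x : g} (hx : x ∈ S.rootSp α)
    {v : V} (hv : v ∈ S.jointEig V φ μ) (k : ℤ) (a : A) :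
    ⁅S.E k x a, v⁆ ∈ S.jointEig V (φ + α) (μ + k) := by
  obtain ⟨hH, hd⟩ := mem_jointEig.1 hv
  refine mem_jointEig.2 ⟨fun h => ?_, ?_⟩
  · rw [leibniz_lie, S.lie_EE, hH, (S.rootSp_def α x).1 hx h]
    simp [add_smul, add_comm]
  · rw [leibniz_lie, S.lie_DE, hd]
    simp [add_smul, add_comm]

theorem lie_mem_jointEig_of_commute {φ : Module.Dual ℂ S.H} {μ c : ℂ} {v : V} {z : L}
    (hH : ∀ h : S.H, ⁅S.E 0 h 1, z⁆ = 0) (hd : ⁅S.D 0 1, z⁆ = c • z)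
    (hv : v ∈ S.jointEig V φ μ) : ⁅z, v⁆ ∈ S.jointEig V φ (μ + c) := by
  obtain ⟨hH', hd'⟩ := mem_jointEig.1 hv
  refine mem_jointEig.2 ⟨fun h => ?_, ?_⟩
  · rw [leibniz_lie, hH, zero_lie, zero_add, hH', lie_smul]
  · rw [leibniz_lie, hd, hd', smul_lie, lie_smul, add_smul, add_comm]

theorem lie_D_mem_jointEig {φ : Module.Dual ℂ S.H} {μ : ℂ} {v : V}
    (hv : v ∈ S.jointEig V φ μ) (k : ℤ) (a : A) : ⁅S.D k a, v⁆ ∈ S.jointEig V φ (μ + k) :=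
  S.lie_mem_jointEig_of_commute (fun h => by simp [lie_ED]) (by
    simpa [gen_apply] using S.lie_D_zero_one_gen k (0, 1, 0, 0) a) hv

theorem lie_D_zero_mem_jointEig {φ : Module.Dual ℂ S.H} {μ : ℂ} {v : V}
    (hv : v ∈ S.jointEig V φ μ) (a : A) : ⁅S.D 0 a, v⁆ ∈ S.jointEig V φ μ := by
  simpa using S.lie_D_mem_jointEig hv 0 a

theorem iSup_jointEig (hV : S.IsWeightModule V) :
    ⨆ p : Module.Dual ℂ S.H × ℂ, S.jointEig V p.1 p.2 = ⊤ := by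
  refine top_le_iff.1 (hV.ge.trans (iSup_le fun χ => ?_))
  let φ : Module.Dual ℂ S.H :=
    { toFun := fun h => χ (S.eH h)
      map_add' := fun x y => by rw [← map_add]; congr 1; ext; simp [eH]
      map_smul' := fun c x => by rw [RingHom.id_apply, ← map_smul]; congr 1; ext; simp [eH] }
  exact le_iSup_of_le (φ, χ S.d0) fun v hv => mem_jointEig.2 ⟨fun h => hv (S.eH h), hv S.d0⟩

section Irreducible

variable [IsSimpleOrder (LieSubmodule ℂ L V)]

theorem exists_C_one_smul (hV : S.IsWeightModule V) : ∃ c : ℂ, ∀ v : V, ⁅S.C 1, v⁆ = c • v := by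
  have := (LieSubmodule.nontrivial_iff ℂ L V).1 inferInstance
  obtain ⟨χ, hχ⟩ := exists_ne_bot_of_iSup_eq_top hV
  obtain ⟨v, hv, hv0⟩ := (Submodule.ne_bot_iff _).1 hχ
  refine ⟨χ S.C1, fun w => ?_⟩
  have htop : (LieModule.toEnd ℂ L V (S.C 1)).eigenspace (χ S.C1) = ⊤ := by
    refine S.eq_top_of_forall_lie_gen_mem (fun k q a u hu => ?_)
      (Module.End.mem_eigenspace_iff.2 (hv S.C1)) hv0
    rw [Module.End.mem_eigenspace_iff, LieModule.toEnd_apply_apply] at hu ⊢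
    rw [leibniz_lie, S.C_central, zero_lie, zero_add, hu, lie_smul]
  exact Module.End.mem_eigenspace_iff.1 (htop ▸ Submodule.mem_top : w ∈ _)

theorem finiteDimensional_jointEig (hV : S.IsWeightModule V) (hfin : S.HasFinDimWeightSpaces V)
    (hK0 : ∀ v : V, ⁅S.K 1, v⁆ = 0) (φ : Module.Dual ℂ S.H) (μ : ℂ) :
    FiniteDimensional ℂ (S.jointEig V φ μ) := by
  rcases eq_or_ne (S.jointEig V φ μ) ⊥ with hbot | hne
  · rw [hbot]; infer_instance
  obtain ⟨c, hc⟩ := S.exists_C_one_smul hV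
  have hscalar (z : S.cartan) : ∃ s : ℂ, ∀ w ∈ S.jointEig V φ μ, ⁅(z : L), w⁆ = s • w := by
    obtain ⟨z, hz⟩ := z
    induction hz using Submodule.span_induction with
    | mem z hz =>
      rcases hz with ⟨h, hh, rfl⟩ | rfl | rfl | rfl
      · exact ⟨φ ⟨h, hh⟩, fun w hw => (mem_jointEig.1 hw).1 ⟨h, hh⟩⟩
      · exact ⟨0, fun w _ => by rw [hK0, zero_smul]⟩
      · exact ⟨μ, fun w hw => (mem_jointEig.1 hw).2⟩
      · exact ⟨c, fun w _ => hc w⟩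
    | zero => exact ⟨0, fun w _ => by simp⟩
    | add x y _ _ hx hy =>
      obtain ⟨⟨s, hs⟩, ⟨t, ht⟩⟩ := And.intro hx hy
      exact ⟨s + t, fun w hw => by rw [add_lie, hs w hw, ht w hw, add_smul]⟩
    | smul r x _ hx =>
      obtain ⟨s, hs⟩ := hx
      exact ⟨r * s, fun w hw => by rw [smul_lie, hs w hw, mul_smul]⟩
  obtain ⟨χ, hχ⟩ := exists_dual_forall_eq_smul
    ((LieModule.toEnd ℂ L V : L →ₗ[ℂ] Module.End ℂ V) ∘ₗ S.cartan.subtype) hne hscalar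
  have := hfin χ
  exact Submodule.finiteDimensional_of_le (S₂ := S.wtSpace V χ) fun w hw z => hχ z w hw

end Irreducible

end JointEigenspace

/-! ### Root spaces -/

section RootSpaces

variable {g A L : Type*} [LieRing g] [LieAlgebra ℂ g] [CommRing A] [Algebra ℂ A] [LieRing L]
  [LieAlgebra ℂ L] (S : LoopAffVir g A L)

theorem lie_mem_rootSp {α β : Module.Dual ℂ S.H} {x y : g} (hx : x ∈ S.rootSp α)
    (hy : y ∈ S.rootSp β) : ⁅x, y⁆ ∈ S.rootSp (α + β) := by
  refine (S.rootSp_def _ _).2 fun h => ?_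
  rw [leibniz_lie, (S.rootSp_def _ _).1 hx, (S.rootSp_def _ _).1 hy, smul_lie, lie_smul,
    LinearMap.add_apply, add_smul]

end RootSpaces

section Roots

variable {g A L : Type*} [LieRing g] [LieAlgebra ℂ g] [FiniteDimensional ℂ g]
  [LieAlgebra.IsSimple ℂ g] [CommRing A] [Algebra ℂ A] [LieRing L] [LieAlgebra ℂ L]
  (S : LoopAffVir g A L)

theorem mem_rootSpace_iff {α : Module.Dual ℂ S.H} {x : g} :
    haveI := S.isCartan
    x ∈ LieAlgebra.rootSpace S.H (α : S.H → ℂ) ↔ x ∈ S.rootSp α := by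
  have := S.isCartan
  rw [S.rootSp_def]
  exact ⟨fun hx h => LieAlgebra.IsKilling.lie_eq_smul_of_mem_rootSpace hx h, fun hx =>
    LieModule.weightSpace_le_genWeightSpace g _ ((LieModule.mem_weightSpace _ _).2 hx)⟩

theorem mem_rootSp_zero_iff {x : g} : x ∈ S.rootSp 0 ↔ x ∈ S.H := by
  have := S.isCartan
  rw [← S.mem_rootSpace_iff]
  change x ∈ LieAlgebra.rootSpace S.H 0 ↔ _
  rw [LieAlgebra.rootSpace_zero_eq ℂ g S.H]
  exact LieSubalgebra.mem_toLieSubmodule x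

theorem exists_isSl2Triple {α : Module.Dual ℂ S.H} (h0 : α ≠ 0) (hα : S.rootSp α ≠ ⊥) :
    ∃ h e f : g, IsSl2Triple h e f ∧ h ∈ S.H ∧ f ∈ S.rootSp (-α) ∧ S.rootSp α = ℂ ∙ e := by
  have := S.isCartan
  obtain ⟨x, hx, hx0⟩ := (Submodule.ne_bot_iff _).1 hα
  let w : LieModule.Weight ℂ S.H g := ⟨α, fun hbot => hx0 <| by
    have hmem := S.mem_rootSpace_iff.2 hx
    rwa [LieAlgebra.rootSpace, hbot, LieSubmodule.mem_bot] at hmem⟩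
  have hw : w.IsNonZero := fun hzero => h0 (LinearMap.ext (congrFun hzero))
  obtain ⟨h, e, f, ht, he, hf⟩ := LieAlgebra.IsKilling.exists_isSl2Triple_of_weight_isNonZero hw
  have he' : e ∈ S.rootSp α := S.mem_rootSpace_iff.1 he
  have hf' : f ∈ S.rootSp (-α) := S.mem_rootSpace_iff.1 hf
  refine ⟨h, e, f, ht, ?_, hf', le_antisymm (fun y hy => ?_)
    ((Submodule.span_singleton_le_iff_mem _ _).2 he')⟩
  · rw [← S.mem_rootSp_zero_iff, ← ht.lie_e_f, ← add_neg_cancel α]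
    exact S.lie_mem_rootSp he' hf'
  · obtain ⟨c, hc⟩ := (finrank_eq_one_iff_of_nonzero' (⟨e, he⟩ : LieAlgebra.rootSpace S.H w)
      (by simpa using ht.e_ne_zero)).1 (LieAlgebra.IsKilling.finrank_rootSpace_eq_one w hw)
      ⟨y, S.mem_rootSpace_iff.2 hy⟩
    exact Submodule.mem_span_singleton.2 ⟨c, congrArg Subtype.val hc⟩

/-- The finite set of the roots of `g̊`, together with `0`. -/
noncomputable def rootFinset : Finset (Module.Dual ℂ S.H) :=
  haveI := S.isCartan
  (Set.toFinite (insert 0 (Set.range (LieModule.Weight.toLinear ℂ S.H g)))).toFinset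

omit [LieAlgebra.IsSimple ℂ g] in
theorem zero_mem_rootFinset : 0 ∈ S.rootFinset := by
  simp only [rootFinset, Set.Finite.mem_toFinset, Set.mem_insert_iff, true_or]

theorem sup_rootSp : S.rootFinset.sup S.rootSp = ⊤ := by
  have := S.isCartan
  rw [eq_top_iff, ← LieSubmodule.iSup_toSubmodule_eq_top.2
    (LieModule.iSup_genWeightSpace_eq_top' ℂ S.H g)]
  refine iSup_le fun χ => ?_
  have hle : S.rootSp (LieModule.Weight.toLinear ℂ S.H g χ) ≤ S.rootFinset.sup S.rootSp :=
    Finset.le_sup ((Set.Finite.mem_toFinset _).2 (.inr ⟨χ, rfl⟩))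
  exact fun x hx => hle (S.mem_rootSpace_iff.1 hx)

theorem eq_top_of_forall_rootSp_le {N : LieSubalgebra ℂ g}
    (hN : ∀ α ≠ 0, S.rootSp α ≤ N.toSubmodule) : N = ⊤ := by
  have := S.isCartan
  have hH : S.H.toSubmodule ≤ N.toSubmodule := by
    suffices ⊤ ≤ N.toSubmodule.comap S.H.toSubmodule.subtype from
      fun x hx => this (Submodule.mem_top : (⟨x, hx⟩ : S.H) ∈ ⊤)
    rw [← LieSubmodule.top_toSubmodule (R := ℂ) (L := S.H),
      ← LieAlgebra.IsKilling.biSup_corootSpace_eq_top]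
    simp only [LieSubmodule.iSup_toSubmodule]
    refine iSup₂_le fun α hα x hx => ?_
    have hα0 : LieModule.Weight.toLinear ℂ S.H g α ≠ 0 :=
      mt LieModule.Weight.coe_toLinear_eq_zero_iff.1 hα
    have hx' := (LieAlgebra.mem_corootSpace _).1 hx
    refine (Submodule.span_le (p := N.toSubmodule)).2 ?_ hx'
    rintro _ ⟨y, hy, z, hz, rfl⟩
    exact N.lie_mem (hN _ hα0 (S.mem_rootSpace_iff.1 hy))
      (hN _ (neg_ne_zero.2 hα0) (S.mem_rootSpace_iff.1 hz))
  rw [← LieSubalgebra.toSubmodule_inj, LieSubalgebra.top_toSubmodule, eq_top_iff, ← S.sup_rootSp]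
  refine Finset.sup_le fun α _ => ?_
  rcases eq_or_ne α 0 with rfl | hα
  · exact fun x hx => hH (S.mem_rootSp_zero_iff.1 hx)
  · exact hN α hα

end Roots

/-! ### Annihilators of joint eigenspaces -/

section AnnIdeal

variable {g A L : Type*} [LieRing g] [LieAlgebra ℂ g] [CommRing A] [Algebra ℂ A]
  [LieRing L] [LieAlgebra ℂ L] (S : LoopAffVir g A L)
  {V : Type*} [AddCommGroup V] [Module ℂ V] [LieRingModule L V] [LieModule ℂ L V]

/-- The largest ideal contained in `S.ann k v` for every `v ∈ W`. -/
def annIdeal (k : ℤ) (W : Submodule ℂ V) : Ideal A where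
  carrier := {a | ∀ b, ∀ v ∈ W, b * a ∈ S.ann k v}
  add_mem' ha hb c v hv := by rw [mul_add]; exact add_mem (ha c v hv) (hb c v hv)
  zero_mem' c v _ := by rw [mul_zero]; exact zero_mem _
  smul_mem' c a ha b v hv := by rw [smul_eq_mul, ← mul_assoc]; exact ha _ v hv

variable {S} {W : Submodule ℂ V}

theorem mem_ann_of_mem_annIdeal {k : ℤ} {a : A} (ha : a ∈ S.annIdeal k W) {v : V} (hv : v ∈ W) :
    a ∈ S.ann k v := by
  simpa using ha 1 v hv

theorem mem_annIdeal_iff_of_lie_D_mem {k : ℤ} (hk : k ≠ 0)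
    (hW : ∀ b, ∀ v ∈ W, ⁅S.D 0 b, v⁆ ∈ W) {a : A} :
    a ∈ S.annIdeal k W ↔ ∀ v ∈ W, a ∈ S.ann k v := by
  refine ⟨fun ha v => mem_ann_of_mem_annIdeal ha, fun h b v hv => ?_⟩
  obtain ⟨hD, hE⟩ := (mem_ann_iff_of_ne_zero hk).1 (h v hv)
  obtain ⟨hD', hE'⟩ := (mem_ann_iff_of_ne_zero hk).1 (h _ (hW b v hv))
  have hk' : (k : ℂ) ≠ 0 := by exact_mod_cast hk
  refine (mem_ann_iff_of_ne_zero hk).2 ⟨?_, fun x => ?_⟩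
  · have := leibniz_lie (S.D 0 b) (S.D k a) v
    rw [hD, hD', S.lie_DD, if_neg (by lia), zero_smul, add_zero, zero_add, Int.cast_zero,
      sub_zero, add_zero, smul_lie, lie_zero] at this
    exact (smul_eq_zero.1 this.symm).resolve_left hk'
  · have := leibniz_lie (S.D 0 b) (S.E k x a) v
    rw [hE, hE', S.lie_DE, smul_lie, lie_zero, add_zero, add_zero] at this
    exact (smul_eq_zero.1 this.symm).resolve_left hk'

variable (S W)

theorem annIdeal_mul_le {m k : ℤ} (hm : m ≠ 0) (hk : k ≠ 0) (hmk : m ≠ k) (h0 : m + k ≠ 0) :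
    S.annIdeal m W * S.annIdeal k W ≤ S.annIdeal (m + k) W := by
  refine Ideal.mul_le.2 fun a ha b hb c v hv => ?_
  rw [← mul_assoc]
  exact mul_mem_ann hk hmk h0 ((mem_ann_iff_of_ne_zero hm).1 (ha c v hv)).1
    (mem_ann_of_mem_annIdeal hb hv)

theorem inf_pow_le_annIdeal {ε : ℤ} (hε : ε ≠ 0) (k : ℕ) :
    (S.annIdeal ε W ⊓ S.annIdeal (2 * ε) W) ^ (k + 1) ≤ S.annIdeal ((k + 1) * ε) W := by
  induction k with
  | zero => simp
  | succ k ih =>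
    rcases Nat.eq_zero_or_pos k with rfl | hk
    · simp only [zero_add, Nat.cast_one, one_add_one_eq_two]
      exact (Ideal.pow_le_self two_ne_zero).trans inf_le_right
    · have hdeg : ((k + 1 : ℕ) + 1) * ε = ε + (k + 1) * ε := by push_cast; ring
      have hprod (j : ℤ) (hj : 0 < j) : j * ε ≠ 0 := mul_ne_zero hj.ne' hε
      rw [pow_succ', hdeg]
      refine (Ideal.mul_mono inf_le_left ih).trans
        (S.annIdeal_mul_le W hε (hprod _ (by lia)) (fun h => ?_) ?_)
      · exact hprod k (by lia) (by linear_combination -h)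
      · rw [← hdeg]
        exact hprod _ (by lia)

end AnnIdeal

section NearEig

variable {g A L : Type*} [LieRing g] [LieAlgebra ℂ g] [FiniteDimensional ℂ g] [CommRing A]
  [Algebra ℂ A] [LieRing L] [LieAlgebra ℂ L] (S : LoopAffVir g A L)
  {V : Type*} [AddCommGroup V] [Module ℂ V] [LieRingModule L V] [LieModule ℂ L V]

variable (V) in
/-- The sum of the joint eigenspaces whose weight differs from `φ` by a root of `g̊` or by `0`:
the homogeneous elements of degree `0` map the joint eigenspace of weight `φ` there. -/
noncomputable def nearEig (φ : Module.Dual ℂ S.H) (μ : ℂ) : Submodule ℂ V :=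
  S.rootFinset.sup fun α => S.jointEig V (φ + α) μ

instance [∀ φ μ, FiniteDimensional ℂ (S.jointEig V φ μ)] (φ : Module.Dual ℂ S.H) (μ : ℂ) :
    FiniteDimensional ℂ (S.nearEig V φ μ) :=
  Submodule.finiteDimensional_finset_sup _ _

theorem jointEig_le_nearEig (φ : Module.Dual ℂ S.H) (μ : ℂ) :
    S.jointEig V φ μ ≤ S.nearEig V φ μ := by
  conv_lhs => rw [← add_zero φ]
  exact Finset.le_sup (f := fun α => S.jointEig V (φ + α) μ) S.zero_mem_rootFinset

variable [LieAlgebra.IsSimple ℂ g]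

theorem lie_E_mem_nearEig {φ : Module.Dual ℂ S.H} {μ : ℂ} {v : V} (hv : v ∈ S.jointEig V φ μ)
    (k : ℤ) (x : g) (a : A) : ⁅S.E k x a, v⁆ ∈ S.nearEig V φ (μ + k) := by
  let f : g →ₗ[ℂ] V :=
    (LieModule.toEnd ℂ L V : L →ₗ[ℂ] Module.End ℂ V).flip v ∘ₗ (S.E k).flip a
  have hle : S.rootFinset.sup S.rootSp ≤ (S.nearEig V φ (μ + k)).comap f :=
    Finset.sup_le fun α hα y hy =>
      Finset.le_sup (f := fun β => S.jointEig V (φ + β) (μ + k)) hα (S.lie_E_mem_jointEig hy hv k a)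
  exact hle (S.sup_rootSp ▸ Submodule.mem_top : x ∈ _)

theorem lie_gen_mem_nearEig {φ : Module.Dual ℂ S.H} {μ : ℂ} {v : V} (hv : v ∈ S.jointEig V φ μ)
    (k : ℤ) (q : g × ℂ × ℂ × ℂ) (a : A) : ⁅S.gen k q a, v⁆ ∈ S.nearEig V φ (μ + k) := by
  rw [gen_apply, add_lie, add_lie, smul_lie]
  refine add_mem (add_mem (S.lie_E_mem_nearEig hv k _ a) (Submodule.smul_mem _ _
    (S.jointEig_le_nearEig _ _ (S.lie_D_mem_jointEig hv k a)))) ?_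
  split_ifs with hk
  · subst hk
    refine S.jointEig_le_nearEig _ _ (S.lie_mem_jointEig_of_commute (fun h => ?_) ?_ hv)
    all_goals simp [lie_K, lie_C]
  · rw [zero_lie]
    exact zero_mem _

variable (V) in
/-- The action `v ↦ a ↦ q ↦ ⁅S.gen k q a, v⁆` on a joint eigenspace. -/
noncomputable def genAction (k : ℤ) (φ : Module.Dual ℂ S.H) (μ : ℂ) :
    S.jointEig V φ μ →ₗ[ℂ] A →ₗ[ℂ] (g × ℂ × ℂ × ℂ) →ₗ[ℂ] S.nearEig V φ (μ + k) :=
  LinearMap.mk₂ ℂ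
    (fun v a => LinearMap.codRestrict _
      ((LieModule.toEnd ℂ L V : L →ₗ[ℂ] Module.End ℂ V).flip (v : V) ∘ₗ (S.gen k).flip a)
      fun q => S.lie_gen_mem_nearEig v.2 k q a)
    (fun _ _ _ => LinearMap.ext fun _ => Subtype.ext (lie_add _ _ _))
    (fun _ _ _ => LinearMap.ext fun _ => Subtype.ext (lie_smul _ _ _))
    (fun v a b => LinearMap.ext fun q => Subtype.ext
      ((congrArg (⁅·, (v : V)⁆) (map_add (S.gen k q) a b)).trans (add_lie _ _ _)))
    (fun c v a => LinearMap.ext fun q => Subtype.ext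
      ((congrArg (⁅·, (v : V)⁆) (map_smul (S.gen k q) c a)).trans (smul_lie _ _ _)))

variable {S} in
theorem genAction_eq_zero_iff {k : ℤ} {φ : Module.Dual ℂ S.H} {μ : ℂ} {v : S.jointEig V φ μ}
    {a : A} : S.genAction V k φ μ v a = 0 ↔ a ∈ S.ann k (v : V) := by
  rw [LinearMap.ext_iff, mem_ann]
  exact forall_congr' fun q => Subtype.ext_iff

theorem mem_annIdeal_jointEig_of_genAction_eq_zero {k : ℤ} (hk : k ≠ 0)
    {φ : Module.Dual ℂ S.H} {μ : ℂ} {a : A} (ha : ∀ v, S.genAction V k φ μ v a = 0) :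
    a ∈ S.annIdeal k (S.jointEig V φ μ) := by
  rw [mem_annIdeal_iff_of_lie_D_mem hk fun b v hv => S.lie_D_zero_mem_jointEig hv b]
  exact fun v hv => genAction_eq_zero_iff.1 (ha ⟨v, hv⟩)

variable [∀ φ μ, FiniteDimensional ℂ (S.jointEig V φ μ)]

theorem isCofiniteIdeal_annIdeal {k : ℤ} (hk : k ≠ 0) (φ : Module.Dual ℂ S.H) (μ : ℂ) :
    IsCofiniteIdeal (S.annIdeal k (S.jointEig V φ μ)) :=
  finiteDimensional_quotient_of_forall_mem (S.genAction V k φ μ) fun _ =>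
    S.mem_annIdeal_jointEig_of_genAction_eq_zero hk

theorem finrank_quotient_annIdeal_le {k : ℤ} (hk : k ≠ 0) (φ : Module.Dual ℂ S.H) (μ : ℂ) :
    Module.finrank ℂ (A ⧸ S.annIdeal k (S.jointEig V φ μ)) ≤
      Module.finrank ℂ (S.jointEig V φ μ) *
        (Module.finrank ℂ (g × ℂ × ℂ × ℂ) * Module.finrank ℂ (S.nearEig V φ (μ + k))) :=
  finrank_quotient_le_of_forall_mem (S.genAction V k φ μ) fun _ =>
    S.mem_annIdeal_jointEig_of_genAction_eq_zero hk

theorem exists_ne_zero_le_ann_of_finrank_lt {φ : Module.Dual ℂ S.H} {μ : ℂ} {j k : ℤ}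
    {F : Submodule ℂ A} [FiniteDimensional ℂ F]
    (h : Module.finrank ℂ F * (Module.finrank ℂ (g × ℂ × ℂ × ℂ) *
        Module.finrank ℂ (S.nearEig V φ (μ + j))) +
      Module.finrank ℂ F * (Module.finrank ℂ (g × ℂ × ℂ × ℂ) *
        Module.finrank ℂ (S.nearEig V φ (μ + k))) < Module.finrank ℂ (S.jointEig V φ μ)) :
    ∃ v ∈ S.jointEig V φ μ, v ≠ 0 ∧ F ≤ S.ann j v ∧ F ≤ S.ann k v := by
  obtain ⟨v, hv0, hv⟩ := exists_ne_zero_forall_mem_apply_eq_zero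
    (S.genAction V j φ μ) (S.genAction V k φ μ) h
  exact ⟨v, v.2, mt Submodule.coe_eq_zero.1 hv0, fun a ha => genAction_eq_zero_iff.1 (hv a ha).1,
    fun a ha => genAction_eq_zero_iff.1 (hv a ha).2⟩

end NearEig

/-! ### Bounded weight multiplicities -/

section Bounded

variable {g A L : Type*} [LieRing g] [LieAlgebra ℂ g] [FiniteDimensional ℂ g]
  [LieAlgebra.IsSimple ℂ g] [CommRing A] [Algebra ℂ A]
  [LieRing L] [LieAlgebra ℂ L] {S : LoopAffVir g A L}
  {V : Type*} [AddCommGroup V] [Module ℂ V] [LieRingModule L V] [LieModule ℂ L V]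
  [∀ φ μ, FiniteDimensional ℂ (S.jointEig V φ μ)]

theorem exists_finrank_quotient_annIdeal_le {φ : Module.Dual ℂ S.H} {μ : ℂ}
    (hB : ∀ φ, BddAbove (Set.range fun n : ℤ => Module.finrank ℂ (S.jointEig V φ (μ + n)))) :
    ∃ N : ℕ, ∀ k : ℤ, k ≠ 0 →
      Module.finrank ℂ (A ⧸ S.annIdeal k (S.jointEig V φ μ)) ≤ N := by
  choose B hB using hB
  have hle (k : ℤ) : Module.finrank ℂ (S.nearEig V φ (μ + k)) ≤
      ∑ α ∈ S.rootFinset, B (φ + α) :=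
    (finrank_finset_sup_le_sum S.rootFinset _).trans
      (Finset.sum_le_sum fun α _ => hB (φ + α) ⟨k, rfl⟩)
  exact ⟨_, fun k hk => (S.finrank_quotient_annIdeal_le hk φ μ).trans
    (Nat.mul_le_mul_left _ (Nat.mul_le_mul_left _ (hle k)))⟩

theorem inf_pow_le_annIdeal_of_finrank_le {φ : Module.Dual ℂ S.H} {μ : ℂ} {N : ℕ}
    (hN : ∀ k : ℤ, k ≠ 0 → Module.finrank ℂ (A ⧸ S.annIdeal k (S.jointEig V φ μ)) ≤ N)
    {ε : ℤ} (hε : ε ≠ 0) (k : ℕ) :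
    (S.annIdeal ε (S.jointEig V φ μ) ⊓ S.annIdeal (2 * ε) (S.jointEig V φ μ)) ^ N ≤
      S.annIdeal ((k + 1) * ε) (S.jointEig V φ μ) := by
  have hk : ((k : ℤ) + 1) * ε ≠ 0 := mul_ne_zero (by lia) hε
  have : FiniteDimensional ℂ (A ⧸ S.annIdeal ((k + 1) * ε) (S.jointEig V φ μ)) :=
    S.isCofiniteIdeal_annIdeal hk φ μ
  exact pow_le_of_finrank_quotient_le (S.inf_pow_le_annIdeal _ hε k) (hN _ hk)

theorem exists_annihilates_of_bddAbove [IsNoetherianRing A] [IsSimpleOrder (LieSubmodule ℂ L V)]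
    {φ : Module.Dual ℂ S.H} {μ : ℂ} (hne : S.jointEig V φ μ ≠ ⊥)
    (hB : ∀ φ, BddAbove (Set.range fun n : ℤ => Module.finrank ℂ (S.jointEig V φ (μ + n)))) :
    ∃ R : Ideal A, IsCofiniteIdeal R ∧ S.Annihilates V R := by
  obtain ⟨v, hv, hv0⟩ := (Submodule.ne_bot_iff _).1 hne
  obtain ⟨N, hN⟩ := exists_finrank_quotient_annIdeal_le (φ := φ) hB
  let I (k : ℤ) : Ideal A := S.annIdeal k (S.jointEig V φ μ)
  let J (ε : ℤ) : Ideal A := (I ε ⊓ I (2 * ε)) ^ N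
  have hI {k : ℤ} (hk : k ≠ 0) : IsCofiniteIdeal (I k) := S.isCofiniteIdeal_annIdeal hk φ μ
  have hJ {ε : ℤ} (hε : ε ≠ 0) : IsCofiniteIdeal (J ε) :=
    ((hI hε).inf (hI (mul_ne_zero two_ne_zero hε))).pow N
  have hcof : IsCofiniteIdeal (J 1 ⊓ J (-1)) := (hJ one_ne_zero).inf (hJ (by decide))
  refine ⟨_, hcof.mul hcof, annihilates_mul_self_of_mem_ann hv0 fun k hk a ha => ?_⟩
  refine mem_ann_of_mem_annIdeal (W := S.jointEig V φ μ) ?_ hv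
  rcases lt_or_gt_of_ne hk with hk | hk
  · have := inf_pow_le_annIdeal_of_finrank_le hN (ε := -1) (by decide) (-k - 1).toNat ha.2
    rwa [show (((-k - 1).toNat : ℤ) + 1) * (-1) = k by lia] at this
  · have := inf_pow_le_annIdeal_of_finrank_le hN one_ne_zero (k - 1).toNat ha.1
    rwa [show (((k - 1).toNat : ℤ) + 1) * 1 = k by lia] at this

end Bounded

end LoopAffVir

open Filter in
theorem eventually_atTop_of_add_closed {P : ℤ → Prop}
    (hadd : ∀ j k, 0 < j → j < k → P j → P k → P (j + k)) {n : ℤ} (hn : 0 < n) (h : P n)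
    (h' : P (n + 1)) : ∀ᶠ k in atTop, P k := by
  have hmul {j m : ℤ} (hj : 0 < j) (hjm : j < m) (hPj : P j) (hPm : P m) (c : ℕ) :
      P (m + c * j) := by
    induction c with
    | zero => simpa using hPm
    | succ c ih =>
      have hnonneg : 0 ≤ (c : ℤ) * j := by positivity
      convert hadd j (m + c * j) hj (by lia) hPj ih using 1
      push_cast
      ring
  have hsum : P (2 * n + 1) := by
    convert hadd n (n + 1) hn (lt_add_one n) h h' using 1
    ring
  filter_upwards [eventually_ge_atTop (2 * n + 1 + n * n)] with k hk
  set q := (k - (2 * n + 1)) / n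
  set r := (k - (2 * n + 1)) % n
  have hr0 : 0 ≤ r := Int.emod_nonneg _ hn.ne'
  have hrn : r < n := Int.emod_lt_of_pos _ hn
  have hqn : n ≤ q := (Int.le_ediv_iff_mul_le hn).2 (by lia)
  have hqr : r + n * q = k - (2 * n + 1) := Int.emod_add_mul_ediv _ _
  have hk' : k = 2 * n + 1 + r.toNat * (n + 1) + (q - r).toNat * n := by
    rw [Int.toNat_of_nonneg hr0, Int.toNat_of_nonneg (by lia)]
    linear_combination -hqr
  have hnonneg : 0 ≤ (r.toNat : ℤ) * (n + 1) := by positivity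
  rw [hk']
  exact hmul hn (by lia) h (hmul (by lia) (by lia) h' hsum _) _

namespace LoopAffVir

/-! ### Unbounded weight multiplicities -/

section Eventually

open Filter

variable {g A L : Type*} [LieRing g] [LieAlgebra ℂ g] [CommRing A] [Algebra ℂ A]
  [LieRing L] [LieAlgebra ℂ L] {S : LoopAffVir g A L}
  {V : Type*} [AddCommGroup V] [Module ℂ V] [LieRingModule L V] [LieModule ℂ L V]

theorem eventually_lie_D_one_eq_zero {n : ℤ} (hn : 0 < n) {v : V} (h : ⁅S.D n 1, v⁆ = 0)
    (h' : ⁅S.D (n + 1) 1, v⁆ = 0) : ∀ᶠ k in atTop, ⁅S.D k 1, v⁆ = 0 := by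
  refine eventually_atTop_of_add_closed (fun j k hj hjk hPj hPk => ?_) hn h h'
  have hne : (k : ℂ) - j ≠ 0 := sub_ne_zero.2 (by exact_mod_cast hjk.ne')
  have := leibniz_lie (S.D j 1) (S.D k 1) v
  rw [hPj, hPk, lie_zero, lie_zero, add_zero, S.lie_DD, if_neg (by lia), zero_smul, add_zero,
    mul_one, smul_lie] at this
  exact (smul_eq_zero.1 this.symm).resolve_left hne

theorem eventually_subset_ann {n : ℤ} (hn : n ≠ 0) {v : V} {X : Set A}
    (hv : ∀ᶠ k in atTop, ⁅S.D k 1, v⁆ = 0) (hX : X ⊆ S.ann n v) :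
    ∀ᶠ k in atTop, X ⊆ S.ann k v := by
  have hshift : Tendsto (fun k : ℤ => k + -n) atTop atTop :=
    tendsto_atTop_add_const_right atTop (-n) tendsto_id
  filter_upwards [hshift.eventually hv, eventually_gt_atTop (2 * n), eventually_gt_atTop 0]
    with k hk hkn hk0 a ha
  have := mul_mem_ann hn (by lia) (by lia) hk (hX ha)
  rwa [one_mul, neg_add_cancel_right] at this

theorem eventually_subset_ann_of_ideal [IsSimpleOrder (LieSubmodule ℂ L V)] {I : Ideal A}
    {v : V} (hv0 : v ≠ 0) (hv : ∀ᶠ k in atTop, (I : Set A) ⊆ S.ann k v) (w : V) :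
    ∀ᶠ k in atTop, (I : Set A) ⊆ S.ann k w := by
  let N : Submodule ℂ V :=
    { carrier := {w | ∀ᶠ k in atTop, (I : Set A) ⊆ S.ann k w}
      add_mem' := fun {u w} hu hw => by
        filter_upwards [hu, hw] with k hu hw a ha
        refine mem_ann.2 fun q => ?_
        rw [lie_add, mem_ann.1 (hu ha), mem_ann.1 (hw ha), add_zero]
      zero_mem' := .of_forall fun k a _ => mem_ann.2 fun q => lie_zero _
      smul_mem' := fun c u hu => by
        filter_upwards [hu] with k hu a ha
        refine mem_ann.2 fun q => ?_
        rw [lie_smul, mem_ann.1 (hu ha), smul_zero] }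
  have hN : N = ⊤ := by
    refine S.eq_top_of_forall_lie_gen_mem (fun m p b u hu => ?_) (show v ∈ N from hv) hv0
    change ∀ᶠ k in atTop, (I : Set A) ⊆ S.ann k ⁅S.gen m p b, u⁆
    have hshift : Tendsto (fun k : ℤ => k + m) atTop atTop :=
      tendsto_atTop_add_const_right atTop m tendsto_id
    filter_upwards [hu, hshift.eventually hu] with k hk hkm a ha
    refine mem_ann.2 fun q => ?_
    obtain ⟨r, hr⟩ := S.exists_lie_lie_gen (V := V) k m q p
    rw [hr, mem_ann.1 (hkm (I.mul_mem_right b ha)), mem_ann.1 (hk ha), lie_zero, add_zero]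
  exact (hN ▸ Submodule.mem_top : w ∈ N)

end Eventually

section Unbounded

open Filter

variable {g A L : Type*} [LieRing g] [LieAlgebra ℂ g] [FiniteDimensional ℂ g]
  [LieAlgebra.IsSimple ℂ g] [CommRing A] [Algebra ℂ A]
  [LieRing L] [LieAlgebra ℂ L] {S : LoopAffVir g A L}
  {V : Type*} [AddCommGroup V] [Module ℂ V] [LieRingModule L V] [LieModule ℂ L V]
  [∀ φ μ, FiniteDimensional ℂ (S.jointEig V φ μ)]

/-- The nonzero degrees `n` and `n + 1` map the eigenspaces at `μ - n`, whose dimension is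
unbounded, to eigenspaces at the fixed eigenvalues `μ` and `μ + 1`. -/
theorem exists_ne_zero_le_ann_of_not_bddAbove {φ : Module.Dual ℂ S.H} {μ : ℂ}
    (hB : ¬ BddAbove (Set.range fun n : ℕ => Module.finrank ℂ (S.jointEig V φ (μ - n))))
    (F : Submodule ℂ A) [FiniteDimensional ℂ F] :
    ∃ n : ℤ, 0 < n ∧ ∃ v ∈ S.jointEig V φ (μ - n), v ≠ 0 ∧
      F ≤ S.ann n v ∧ F ≤ S.ann (n + 1) v := by
  let c (ν : ℂ) : ℕ := Module.finrank ℂ F * (Module.finrank ℂ (g × ℂ × ℂ × ℂ) *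
    Module.finrank ℂ (S.nearEig V φ ν))
  obtain ⟨-, ⟨n, rfl⟩, hn⟩ :=
    not_bddAbove_iff.1 hB (c μ + c (μ + 1) + Module.finrank ℂ (S.jointEig V φ μ))
  have hn : c μ + c (μ + 1) + Module.finrank ℂ (S.jointEig V φ μ) <
      Module.finrank ℂ (S.jointEig V φ (μ - n)) := hn
  have hn0 : 0 < n := by
    refine Nat.pos_of_ne_zero ?_
    rintro rfl
    rw [Nat.cast_zero, sub_zero] at hn
    lia
  refine ⟨n, by lia, S.exists_ne_zero_le_ann_of_finrank_lt ?_⟩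
  have h1 : μ - (n : ℤ) + ((n : ℤ) : ℂ) = μ := sub_add_cancel _ _
  have h2 : μ - (n : ℤ) + ((n + 1 : ℤ) : ℂ) = μ + 1 := by push_cast; ring
  rw [h1, h2, Int.cast_natCast]
  change c μ + c (μ + 1) < _
  lia

theorem exists_ne_zero_eventually_ann_eq_top [IsSimpleOrder (LieSubmodule ℂ L V)]
    {φ : Module.Dual ℂ S.H} {μ : ℂ}
    (hB : ¬ BddAbove (Set.range fun n : ℕ => Module.finrank ℂ (S.jointEig V φ (μ - n)))) :
    ∃ ν, ∃ v ∈ S.jointEig V φ ν, v ≠ 0 ∧ ∀ᶠ k in atTop, S.ann k v = ⊤ := by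
  have hD {F : Submodule ℂ A} (hF : 1 ∈ F) {n : ℤ} (hn : 0 < n) {v : V} (h : F ≤ S.ann n v)
      (h' : F ≤ S.ann (n + 1) v) : ∀ᶠ k in atTop, ⁅S.D k 1, v⁆ = 0 :=
    eventually_lie_D_one_eq_zero hn ((mem_ann_iff_of_ne_zero hn.ne').1 (h hF)).1
      ((mem_ann_iff_of_ne_zero (by lia)).1 (h' hF)).1
  have h1 := Submodule.mem_span_singleton_self (R := ℂ) (1 : A)
  obtain ⟨n, hn, u, hu, hu0, hun, hun'⟩ := exists_ne_zero_le_ann_of_not_bddAbove hB (ℂ ∙ (1 : A))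
  have hI : IsCofiniteIdeal (S.annIdeal 1 (S.jointEig V φ (μ - n))) :=
    S.isCofiniteIdeal_annIdeal one_ne_zero φ _
  have hIw := eventually_subset_ann_of_ideal hu0 <|
    eventually_subset_ann one_ne_zero (hD h1 hn hun hun') fun _ ha => mem_ann_of_mem_annIdeal ha hu
  obtain ⟨F, hF, hFI⟩ := isCofiniteIdeal_iff_exists_fg.1 hI
  have : FiniteDimensional ℂ (F ⊔ ℂ ∙ (1 : A) : Submodule ℂ A) :=
    Module.Finite.iff_fg.2 (hF.sup (Submodule.fg_span_singleton 1))
  obtain ⟨m, hm, w, hw, hw0, hwm, hwm'⟩ :=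
    exists_ne_zero_le_ann_of_not_bddAbove hB (F ⊔ ℂ ∙ (1 : A))
  have hFw := eventually_subset_ann hm.ne' (hD (Submodule.mem_sup_right h1) hm hwm hwm')
    fun _ ha => hwm (Submodule.mem_sup_left ha)
  refine ⟨_, w, hw, hw0, ?_⟩
  filter_upwards [hFw, hIw w] with k hFk hIk
  exact top_le_iff.1 (hFI.ge.trans (sup_le hFk hIk))

end Unbounded

end LoopAffVir

theorem exists_nat_of_pow_toEnd_eq_zero {K L V : Type*} [Field K] [CharZero K] [LieRing L]
    [LieAlgebra K L] [AddCommGroup V] [Module K V] [LieRingModule L V] [LieModule K L V]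
    {h e f : L} (hef : ⁅e, f⁆ = h) (hhe : ⁅h, e⁆ = 2 • e) (hhf : ⁅h, f⁆ = -(2 • f)) {v : V} {c : K}
    (hv0 : v ≠ 0) (hv : ⁅h, v⁆ = c • v) (he : ⁅e, v⁆ = 0)
    (hf : ∃ N : ℕ, (LieModule.toEnd K L V f ^ N) v = 0) :
    ∃ n : ℕ, c = n ∧ (n = 0 → ⁅f, v⁆ = 0) := by
  rcases eq_or_ne h 0 with rfl | h0
  · rw [zero_lie, eq_comm, smul_eq_zero_iff_left hv0] at hv
    rw [zero_lie, eq_comm, neg_eq_zero, ← Nat.cast_smul_eq_nsmul K] at hhf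
    have hf0 : f = 0 := (smul_eq_zero.1 hhf).resolve_left (by norm_num)
    exact ⟨0, by simpa using hv, fun _ => by rw [hf0, zero_lie]⟩
  · have ht : IsSl2Triple h e f := ⟨h0, hef, hhe, hhf⟩
    have hprim : ht.HasPrimitiveVectorWith v c := ⟨hv0, hv, he⟩
    obtain ⟨n, hn, hn'⟩ := Nat.exists_not_and_succ_of_not_zero_of_exists
      (p := fun n => (LieModule.toEnd K L V f ^ n) v = 0) (by simpa using hv0) hf
    have := hprim.lie_e_pow_succ_toEnd_f n
    rw [hn', lie_zero, eq_comm, smul_eq_zero_iff_left hn, mul_eq_zero, sub_eq_zero] at this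
    refine ⟨n, this.resolve_left (Nat.cast_add_one_ne_zero n), ?_⟩
    rintro rfl
    simpa using hn'

theorem eventually_eq_zero_of_finite {R M ι : Type*} {N : ι → Type*} [Semiring R]
    [AddCommMonoid M] [Module R M] [Module.Finite R M] [∀ i, AddCommMonoid (N i)]
    [∀ i, Module R (N i)] {l : Filter ι} {f : ∀ i, M →ₗ[R] N i}
    (h : ∀ x, ∀ᶠ i in l, f i x = 0) : ∀ᶠ i in l, f i = 0 := by
  obtain ⟨s, hs⟩ := Module.Finite.fg_top (R := R) (M := M)
  filter_upwards [(Filter.eventually_all_finset s).2 fun x _ => h x] with i hi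
  exact LinearMap.ext_on hs fun x hx => hi x hx

namespace LoopAffVir

/-! ### Triviality of the affine part -/

section Nilpotent

variable {g A L : Type*} [LieRing g] [LieAlgebra ℂ g]
  [CommRing A] [Algebra ℂ A] [LieRing L] [LieAlgebra ℂ L] (S : LoopAffVir g A L)
  (V : Type*) [AddCommGroup V] [Module ℂ V] [LieRingModule L V] [LieModule ℂ L V]

/-- The real root vectors `x ⊗ tⁿ ⊗ a`, for `x` in a root space of `g̊`, act locally nilpotently
on `V`; unlike integrability, this does not require finite-dimensional weight spaces. -/
def IsRootNilpotent : Prop :=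
  ∀ α : Module.Dual ℂ S.H, α ≠ 0 → S.rootSp α ≠ ⊥ → ∀ x ∈ S.rootSp α, ∀ (n : ℤ) (a : A) (v : V),
    ∃ N : ℕ, (LieModule.toEnd ℂ L V (S.E n x a) ^ N) v = 0

variable {S V}

theorem exists_nat_of_isSl2Triple (hK0 : ∀ v : V, ⁅S.K 1, v⁆ = 0) {h e f : g}
    (t : IsSl2Triple h e f) {v : V} {c : ℂ} (hv0 : v ≠ 0) (hv : ⁅S.E 0 h 1, v⁆ = c • v) {k : ℤ}
    (he : ⁅S.E k e 1, v⁆ = 0)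
    (hf : ∃ N : ℕ, (LieModule.toEnd ℂ L V (S.E (-k) f 1) ^ N) v = 0) :
    ∃ n : ℕ, c = n ∧ (n = 0 → ⁅S.E (-k) f 1, v⁆ = 0) := by
  refine exists_nat_of_pow_toEnd_eq_zero (h := S.E 0 h 1 + ((k : ℂ) * S.form e f) • S.K 1)
    (e := S.E k e 1) ?_ ?_ ?_ hv0 ?_ he hf
  · rw [S.lie_EE, if_pos rfl, t.lie_e_f, add_neg_cancel, mul_one]
  · rw [add_lie, smul_lie, S.K_central, S.lie_EE, t.lie_h_e_nsmul]
    simp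
  · rw [add_lie, smul_lie, S.K_central, S.lie_EE, t.lie_h_f_nsmul]
    simp
  · rw [add_lie, smul_lie, hK0, smul_zero, add_zero, hv]

end Nilpotent

section Perfect

open Filter

variable {g A L : Type*} [LieRing g] [LieAlgebra ℂ g] [LieAlgebra.IsSimple ℂ g]
  [CommRing A] [Algebra ℂ A] [LieRing L] [LieAlgebra ℂ L] {S : LoopAffVir g A L}
  {V : Type*} [AddCommGroup V] [Module ℂ V] [LieRingModule L V] [LieModule ℂ L V]

theorem lie_E_eq_zero_of_eventually {v : V} (htop : ∀ᶠ k in atTop, S.ann k v = ⊤)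
    (hbot : ∀ᶠ k in atBot, ∀ x, ⁅S.E k x 1, v⁆ = 0) (n : ℤ) (x : g) (a : A) :
    ⁅S.E n x a, v⁆ = 0 := by
  have hsub : Tendsto (fun m : ℤ => n - m) atBot atTop :=
    tendsto_atTop_add_const_left _ n tendsto_neg_atBot_atTop
  have hpred : Tendsto (fun m : ℤ => m - 1) atBot atBot :=
    tendsto_atBot_add_const_right _ (-1) tendsto_id
  have hkill : ∀ᶠ m in atBot, (∀ x, ⁅S.E m x 1, v⁆ = 0) ∧ ∀ x, ⁅S.E (n - m) x a, v⁆ = 0 := by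
    filter_upwards [hbot, hsub.eventually htop, hsub.eventually (eventually_gt_atTop 0)]
      with m hm hann hpos
    have ha : a ∈ S.ann (n - m) v := hann ▸ Submodule.mem_top
    exact ⟨hm, ((mem_ann_iff_of_ne_zero hpos.ne').1 ha).2⟩
  obtain ⟨m, ⟨h1, ha⟩, h1', ha'⟩ := (hkill.and (hpred.eventually hkill)).exists
  have := lie_E_mul_eq_zero (n := n) (m := m) (m' := m - 1) (by lia) h1 ha h1' ha' x
  rwa [one_mul] at this

theorem lie_K_eq_zero_of_lie_E {v : V} (hE : ∀ n x a, ⁅S.E n x a, v⁆ = 0) (a : A) :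
    ⁅S.K a, v⁆ = 0 := by
  rw [← one_mul a]
  exact lie_K_mul_eq_zero (m := 0) (m' := 1) zero_ne_one (hE 0 · 1) (hE (-0) · a) (hE 1 · 1)
    (hE (-1) · a)

theorem lie_E_eq_zero_of_isSimpleOrder [IsSimpleOrder (LieSubmodule ℂ L V)] {v : V} (hv0 : v ≠ 0)
    (hv : ∀ n x a, ⁅S.E n x a, v⁆ = 0) (n : ℤ) (x : g) (a : A) (u : V) : ⁅S.E n x a, u⁆ = 0 := by
  let N : Submodule ℂ V := ⨅ (n) (x) (a), LinearMap.ker (LieModule.toEnd ℂ L V (S.E n x a))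
  have mem_N {u : V} : u ∈ N ↔ ∀ n x a, ⁅S.E n x a, u⁆ = 0 := by
    simp [N, Submodule.mem_iInf]
  have hN : N = ⊤ := by
    refine S.eq_top_of_forall_lie_gen_mem (fun m p b u hu => ?_) (mem_N.2 hv) hv0
    have hE := mem_N.1 hu
    refine mem_N.2 fun n x a => ?_
    have hcentral : ⁅S.E n x a, if m = 0 then p.2.2.1 • S.K b + p.2.2.2 • S.C b else 0⁆ = 0 := by
      split_ifs <;> simp [lie_K, lie_C]
    rw [leibniz_lie, hE, lie_zero, add_zero, gen_apply, lie_add, hcentral, lie_add, S.lie_EE,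
      lie_smul, lie_ED]
    simp only [add_lie, smul_lie, hE, lie_K_eq_zero_of_lie_E hE, smul_zero, add_zero]
  exact mem_N.1 (hN ▸ Submodule.mem_top) n x a

end Perfect

section LocallyNilpotent

open Filter

variable {g A L : Type*} [LieRing g] [LieAlgebra ℂ g] [FiniteDimensional ℂ g]
  [LieAlgebra.IsSimple ℂ g] [CommRing A] [Algebra ℂ A] [LieRing L] [LieAlgebra ℂ L]
  {S : LoopAffVir g A L}
  {V : Type*} [AddCommGroup V] [Module ℂ V] [LieRingModule L V] [LieModule ℂ L V]

/-- As `K` acts trivially, both `(e ⊗ tᵏ, f ⊗ t⁻ᵏ)` and `(f ⊗ tᵏ, e ⊗ t⁻ᵏ)` span a copy of `sl₂`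
in whose action `v` is a highest weight vector, with opposite weights: both weights vanish. -/
theorem lie_E_neg_eq_zero (hnil : S.IsRootNilpotent V) (hK0 : ∀ v : V, ⁅S.K 1, v⁆ = 0)
    {φ : Module.Dual ℂ S.H} {μ : ℂ} {v : V} (hv : v ∈ S.jointEig V φ μ) (hv0 : v ≠ 0) {k : ℤ}
    (hk : ∀ x, ⁅S.E k x 1, v⁆ = 0) {α : Module.Dual ℂ S.H} (h0 : α ≠ 0) {x : g}
    (hx : x ∈ S.rootSp α) : ⁅S.E (-k) x 1, v⁆ = 0 := by
  by_cases hα : S.rootSp α = ⊥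
  · obtain rfl : x = 0 := by simpa only [hα, Submodule.mem_bot] using hx
    simp
  obtain ⟨h, e, f, t, hh, hf, hspan⟩ := S.exists_isSl2Triple h0 hα
  have he : e ∈ S.rootSp α := hspan ▸ Submodule.mem_span_singleton_self e
  have hα' : S.rootSp (-α) ≠ ⊥ := (Submodule.ne_bot_iff _).2 ⟨f, hf, t.f_ne_zero⟩
  have hhv : ⁅S.E 0 h 1, v⁆ = φ ⟨h, hh⟩ • v := (mem_jointEig.1 hv).1 ⟨h, hh⟩
  obtain ⟨n, hn, -⟩ := exists_nat_of_isSl2Triple hK0 t hv0 hhv (hk e)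
    (hnil _ (neg_ne_zero.2 h0) hα' f hf _ _ _)
  obtain ⟨m, hm, hm'⟩ := exists_nat_of_isSl2Triple hK0 t.symm hv0 (c := -φ ⟨h, hh⟩)
    (by rw [map_neg, LinearMap.neg_apply, neg_lie, hhv, neg_smul]) (hk f)
    (hnil _ h0 hα e he _ _ _)
  have hnm : ((n + m : ℕ) : ℂ) = 0 := by rw [Nat.cast_add, ← hn, ← hm, add_neg_cancel]
  obtain ⟨c, rfl⟩ := Submodule.mem_span_singleton.1 (hspan ▸ hx)
  rw [map_smul, LinearMap.smul_apply, smul_lie,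
    hm' (Nat.add_eq_zero_iff.1 (Nat.cast_eq_zero.1 hnm)).2, smul_zero]

theorem eventually_atBot_lie_E_eq_zero {v : V}
    (hv : ∀ α ≠ 0, ∀ x ∈ S.rootSp α, ∀ᶠ k in atBot, ⁅S.E k x 1, v⁆ = 0) :
    ∀ᶠ k in atBot, ∀ x, ⁅S.E k x 1, v⁆ = 0 := by
  let N : LieSubalgebra ℂ g :=
    { carrier := {x | ∀ᶠ k in atBot, ⁅S.E k x 1, v⁆ = 0}
      add_mem' := fun {x y} hx hy => by
        filter_upwards [hx, hy] with k hx hy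
        rw [map_add, LinearMap.add_apply, add_lie, hx, hy, add_zero]
      zero_mem' := .of_forall fun k => by simp
      smul_mem' := fun c x hx => by
        filter_upwards [hx] with k hx
        rw [map_smul, LinearMap.smul_apply, smul_lie, hx, smul_zero]
      lie_mem' := fun {x y} hx hy => by
        obtain ⟨a, ha⟩ := eventually_atBot.1 hx
        obtain ⟨b, hb⟩ := eventually_atBot.1 hy
        filter_upwards [eventually_lt_atBot (2 * a), eventually_lt_atBot (2 * b - 1),
          eventually_lt_atBot 0] with k hka hkb hk0
        have := lie_E_add_smul_lie_K_eq_zero (ha (k / 2) (by lia)) (hb (k - k / 2) (by lia))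
        rwa [if_neg hk0.ne, zero_smul, add_zero, mul_one] at this }
  have hN : N = ⊤ := S.eq_top_of_forall_rootSp_le fun α hα x hx => hv α hα x hx
  let T : L →ₗ[ℂ] V := (LieModule.toEnd ℂ L V : L →ₗ[ℂ] Module.End ℂ V).flip v
  have hT : ∀ᶠ k in atBot, T ∘ₗ (S.E k).flip 1 = 0 :=
    eventually_eq_zero_of_finite fun x => (hN ▸ LieSubalgebra.mem_top x : x ∈ N)
  filter_upwards [hT] with k hk x
  exact LinearMap.congr_fun hk x

theorem lie_E_eq_zero_of_isRootNilpotent [IsSimpleOrder (LieSubmodule ℂ L V)]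
    (hnil : S.IsRootNilpotent V) (hK0 : ∀ v : V, ⁅S.K 1, v⁆ = 0) {φ : Module.Dual ℂ S.H} {μ : ℂ}
    {v : V} (hv : v ∈ S.jointEig V φ μ) (hv0 : v ≠ 0) (htop : ∀ᶠ k in atTop, S.ann k v = ⊤) (n : ℤ)
    (x : g) (a : A) (u : V) : ⁅S.E n x a, u⁆ = 0 := by
  refine lie_E_eq_zero_of_isSimpleOrder hv0 (lie_E_eq_zero_of_eventually htop
    (eventually_atBot_lie_E_eq_zero fun α hα x hx => ?_)) n x a u
  filter_upwards [tendsto_neg_atBot_atTop.eventually htop, eventually_lt_atBot 0] with k hk hk0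
  have h1 : (1 : A) ∈ S.ann (-k) v := hk ▸ Submodule.mem_top
  rw [← neg_neg k]
  exact lie_E_neg_eq_zero hnil hK0 hv hv0 ((mem_ann_iff_of_ne_zero (by lia)).1 h1).2 hα hx

end LocallyNilpotent

/-! ### Highest weight vectors -/

section OpClosure

variable {L V : Type*} [LieRing L] [AddCommGroup V] [Module ℂ V] [LieRingModule L V]

theorem le_opClosure (Ops : Set L) (X : Submodule ℂ V) : X ≤ opClosure V Ops X :=
  le_sInf fun _ h => h.1

theorem lie_mem_opClosure {Ops : Set L} {X : Submodule ℂ V} {z : L} (hz : z ∈ Ops) {v : V}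
    (hv : v ∈ opClosure V Ops X) : ⁅z, v⁆ ∈ opClosure V Ops X :=
  Submodule.mem_sInf.2 fun N hN => hN.2 z hz v (Submodule.mem_sInf.1 hv N hN)

theorem opClosure_le {Ops : Set L} {X N : Submodule ℂ V} (hX : X ≤ N)
    (hN : ∀ z ∈ Ops, ∀ v ∈ N, ⁅z, v⁆ ∈ N) : opClosure V Ops X ≤ N :=
  sInf_le ⟨hX, hN⟩

end OpClosure

section HighestWeight

variable {g A L : Type*} [LieRing g] [LieAlgebra ℂ g] [CommRing A] [Algebra ℂ A]
  [LieRing L] [LieAlgebra ℂ L] {S : LoopAffVir g A L}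
  {V : Type*} [AddCommGroup V] [Module ℂ V] [LieRingModule L V] [LieModule ℂ L V]

theorem ann_eq_top_of_pos {v : V} (h1 : S.ann 1 v = ⊤) (h2 : S.ann 2 v = ⊤) {k : ℤ}
    (hk : 0 < k) : S.ann k v = ⊤ := by
  have hD : ⁅S.D 1 1, v⁆ = 0 :=
    ((mem_ann_iff_of_ne_zero one_ne_zero).1 (h1 ▸ Submodule.mem_top)).1
  obtain rfl | hk : k = 1 ∨ 2 ≤ k := by lia
  · exact h1
  induction k, hk using Int.leInduction with
  | base => exact h2
  | succ k hk ih =>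
    refine top_le_iff.1 fun a _ => ?_
    rw [add_comm, ← one_mul a]
    exact mul_mem_ann (by lia) (by lia) (by lia) hD (ih (by lia) ▸ Submodule.mem_top)

/-- If degrees above `c` kill `w`, then so do the positive degrees above `c - m`, since
`⁅gen (j + m), D (-m)⁆` is a nonzero multiple of `gen j`. -/
theorem ann_eq_top_of_lie_D_neg {w : V} {m : ℤ} (hm : 0 < m)
    (hu : ∀ k > m, S.ann k ⁅S.D (-m) 1, w⁆ = ⊤) (hw : ∀ᶠ k in Filter.atTop, S.ann k w = ⊤)
    {k : ℤ} (hk : 0 < k) : S.ann k w = ⊤ := by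
  have hdescent (c : ℕ) (hc : ∀ k > (c : ℤ), S.ann k w = ⊤) : ∀ k > 0, S.ann k w = ⊤ := by
    induction c with
    | zero => exact hc
    | succ c ih =>
      refine ih fun j hj => top_le_iff.1 fun a _ => ?_
      rw [← one_mul a, show j = -m + (j + m) by ring]
      exact mul_mem_ann_of_mem_ann_lie_D (by lia) (by lia) (by lia)
        (hc (j + m) (by push_cast; lia) ▸ Submodule.mem_top)
        (hu (j + m) (by lia) ▸ Submodule.mem_top)
  obtain ⟨c, hc⟩ := Filter.eventually_atTop.1 hw
  exact hdescent c.toNat (fun j hj => hc j (by lia)) k hk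

section Irreducible

variable [IsSimpleOrder (LieSubmodule ℂ L V)]

theorem opClosure_eq_top_of_forall_pos {w : V} (hw0 : w ≠ 0) (hw : ∀ k > 0, S.ann k w = ⊤) :
    opClosure V {z | ∃ m ≤ 0, ∃ p b, S.gen m p b = z} (ℂ ∙ w) = ⊤ := by
  set N := opClosure V {z | ∃ m ≤ 0, ∃ p b, S.gen m p b = z} (ℂ ∙ w)
  have hlower {m : ℤ} (hm : m ≤ 0) (p : g × ℂ × ℂ × ℂ) (b : A) {u : V} (hu : u ∈ N) :
      ⁅S.gen m p b, u⁆ ∈ N :=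
    lie_mem_opClosure (Ops := {z | ∃ m ≤ 0, ∃ p b, S.gen m p b = z}) ⟨m, hm, p, b, rfl⟩ hu
  let P : Submodule ℂ V :=
    { carrier := {u | u ∈ N ∧ ∀ k > 0, ∀ q a, ⁅S.gen k q a, u⁆ ∈ N}
      add_mem' := fun hu hv => ⟨add_mem hu.1 hv.1, fun k hk q a => by
        rw [lie_add]; exact add_mem (hu.2 k hk q a) (hv.2 k hk q a)⟩
      zero_mem' := ⟨zero_mem _, fun k _ q a => by rw [lie_zero]; exact zero_mem _⟩
      smul_mem' := fun c u hu => ⟨N.smul_mem c hu.1, fun k hk q a => by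
        rw [lie_smul]; exact N.smul_mem c (hu.2 k hk q a)⟩ }
  have hwN : w ∈ N := le_opClosure _ _ (Submodule.mem_span_singleton_self w)
  have hwP : w ∈ P := ⟨hwN, fun k hk q a => by
    rw [mem_ann.1 (hw k hk ▸ Submodule.mem_top) q]; exact zero_mem _⟩
  have hNP : N ≤ P := by
    refine opClosure_le ((Submodule.span_singleton_le_iff_mem w P).2 hwP) ?_
    rintro - ⟨m, hm, p, b, rfl⟩ u ⟨huN, hu⟩
    refine ⟨hlower hm p b huN, fun k hk q a => ?_⟩
    obtain ⟨r, hr⟩ := S.exists_lie_lie_gen (V := V) k m q p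
    rw [hr]
    refine add_mem ?_ (hlower hm p b (hu k hk q a))
    rcases le_or_gt (k + m) 0 with h | h
    exacts [hlower h r _ huN, hu _ h r _]
  refine S.eq_top_of_forall_lie_gen_mem (fun k q a u hu => ?_) hwN hw0
  rcases le_or_gt k 0 with hk | hk
  exacts [hlower hk q a hu, (hNP hu).2 k hk q a]

theorem iSup_d0Eig_sub_eq_top {w : V} (hw0 : w ≠ 0) {ν : ℂ} (hwν : w ∈ S.d0Eig V ν)
    (hw : ∀ k > 0, S.ann k w = ⊤) : ⨆ n : ℕ, S.d0Eig V (ν - n) = ⊤ := by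
  rw [← top_le_iff, ← opClosure_eq_top_of_forall_pos hw0 hw]
  refine opClosure_le ?_ ?_
  · exact (Submodule.span_singleton_le_iff_mem _ _).2
      (le_iSup (fun n : ℕ => S.d0Eig V (ν - n)) 0 (by simpa using hwν))
  · rintro - ⟨m, hm, p, b, rfl⟩ u hu
    obtain ⟨j, rfl⟩ := Int.exists_eq_neg_ofNat hm
    induction hu using Submodule.iSup_induction' with
    | mem n u hu =>
      refine le_iSup (fun n : ℕ => S.d0Eig V (ν - n)) (n + j) ?_
      convert S.lie_gen_mem_d0Eig hu (-j) p b using 2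
      push_cast
      ring
    | zero => rw [lie_zero]; exact zero_mem _
    | add x y _ _ hx hy => rw [lie_add]; exact add_mem hx hy

theorem eq_zero_of_mem_d0Eig_sub {v w : V} (hv0 : v ≠ 0) {μ : ℂ} (hv : v ∈ S.d0Eig V μ) {k : ℕ}
    (hk : k ≠ 0) (hwμ : w ∈ S.d0Eig V (μ - k)) (hw : ∀ k > 0, S.ann k w = ⊤) : w = 0 := by
  by_contra hw0
  have heig : S.d0Eig V = (LieModule.toEnd ℂ L V (S.D 0 1)).eigenspace := by
    ext ν u
    rw [Module.End.mem_eigenspace_iff]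
    rfl
  have hind : iSupIndep (S.d0Eig V) := heig ▸ Module.End.eigenspaces_iSupIndep _
  have hle : ⨆ n : ℕ, S.d0Eig V (μ - k - n) ≤ ⨆ ν, ⨆ (_ : ν ≠ μ), S.d0Eig V ν := by
    refine iSup_le fun n => le_iSup₂_of_le (μ - k - n) (fun h => hk ?_) le_rfl
    have : ((k + n : ℕ) : ℂ) = 0 := by push_cast; linear_combination -h
    exact (Nat.add_eq_zero_iff.1 (Nat.cast_eq_zero.1 this)).1
  rw [iSup_d0Eig_sub_eq_top hw0 hwμ hw] at hle
  exact hv0 (Submodule.disjoint_def.1 (hind μ) v hv (hle Submodule.mem_top))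

theorem lie_D_neg_eq_zero (hE : ∀ n x a (u : V), ⁅S.E n x a, u⁆ = 0) {v : V} (hv0 : v ≠ 0) {μ : ℂ}
    (hv : v ∈ S.d0Eig V μ) (hpos : ∀ k > 0, S.ann k v = ⊤) {Q : Ideal A}
    (h1 : ∀ a ∈ Q, ⁅S.D (-1) a, v⁆ = 0) (h2 : ∀ a ∈ Q, ⁅S.D (-2) a, v⁆ = 0) {k : ℕ} (hk : k ≠ 0)
    {a : A} (ha : a ∈ Q) : ⁅S.D (-k) a, v⁆ = 0 := by
  induction k using Nat.strong_induction_on generalizing a with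
  | _ k ih =>
    obtain rfl | rfl | hk2 : k = 1 ∨ k = 2 ∨ 2 < k := by lia
    · exact h1 a ha
    · exact h2 a ha
    -- `d₁` and `d₂`, hence all positive degrees, kill `⁅S.D (-k) a, v⁆`.
    have hlift (j : ℕ) (hj0 : j ≠ 0) (hjk : j < k) : S.ann j ⁅S.D (-k) a, v⁆ = ⊤ := by
      refine top_le_iff.1 fun b _ => ?_
      have hD : ⁅S.D j b, v⁆ = 0 := ((mem_ann_iff_of_ne_zero (by lia)).1
        (hpos j (by lia) ▸ Submodule.mem_top)).1
      refine (mem_ann_iff_of_ne_zero (by lia)).2 ⟨?_, fun x => hE _ _ _ _⟩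
      rw [leibniz_lie, hD, lie_zero, add_zero, S.lie_DD, if_neg (by lia), zero_smul, add_zero,
        smul_lie, show (j : ℤ) + -k = -((k - j : ℕ) : ℤ) by lia,
        ih (k - j) (by lia) (by lia) (Q.mul_mem_left b ha), smul_zero]
    refine eq_zero_of_mem_d0Eig_sub hv0 hv hk ?_ fun j hj =>
      ann_eq_top_of_pos (hlift 1 one_ne_zero (by lia)) (hlift 2 two_ne_zero hk2) hj
    simpa [gen_apply, hk, sub_eq_add_neg] using S.lie_gen_mem_d0Eig hv (-k) (0, 1, 0, 0) a

end Irreducible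

end HighestWeight

section Finite

open Filter

variable {g A L : Type*} [LieRing g] [LieAlgebra ℂ g] [FiniteDimensional ℂ g]
  [LieAlgebra.IsSimple ℂ g] [CommRing A] [Algebra ℂ A] [LieRing L] [LieAlgebra ℂ L]
  {S : LoopAffVir g A L}
  {V : Type*} [AddCommGroup V] [Module ℂ V] [LieRingModule L V] [LieModule ℂ L V]

theorem eventually_forall_mem_jointEig_ann_eq_top {φ : Module.Dual ℂ S.H} {μ : ℂ}
    [FiniteDimensional ℂ (S.jointEig V φ μ)]
    (h : ∀ w ∈ S.jointEig V φ μ, ∀ᶠ k in atTop, S.ann k w = ⊤) :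
    ∀ᶠ k in atTop, ∀ w ∈ S.jointEig V φ μ, S.ann k w = ⊤ := by
  have hzero : ∀ᶠ k in atTop, S.genAction V k φ μ = 0 := by
    refine eventually_eq_zero_of_finite fun w => ?_
    filter_upwards [h w w.2] with k hk
    exact LinearMap.ext fun a => genAction_eq_zero_iff.2 (hk ▸ Submodule.mem_top)
  filter_upwards [hzero] with k hk w hw
  exact top_le_iff.1 fun a _ =>
    (genAction_eq_zero_iff (v := ⟨w, hw⟩)).1 (by rw [hk]; rfl)

theorem exists_forall_pos_ann_eq_top {φ : Module.Dual ℂ S.H} {μ : ℂ}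
    [FiniteDimensional ℂ (S.jointEig V φ μ)] (hne : S.jointEig V φ μ ≠ ⊥)
    (hE : ∀ n x a (u : V), ⁅S.E n x a, u⁆ = 0) (h : ∀ w : V, ∀ᶠ k in atTop, S.ann k w = ⊤) :
    ∃ ν, ∃ w ∈ S.jointEig V φ ν, w ≠ 0 ∧ ∀ k > 0, S.ann k w = ⊤ := by
  obtain ⟨n, hn⟩ :=
    eventually_atTop.1 (eventually_forall_mem_jointEig_ann_eq_top (φ := φ) (μ := μ) fun w _ => h w)
  let s : Set ℕ := {m | S.jointEig V φ (μ + m) ≠ ⊥}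
  by_cases hs : BddAbove s
  · have h0 : 0 ∈ s := by simpa [s] using hne
    have hmax : sSup s ∈ s := Nat.sSup_mem ⟨0, h0⟩ hs
    obtain ⟨w, hw, hw0⟩ := (Submodule.ne_bot_iff _).1 hmax
    refine ⟨_, w, hw, hw0, fun k hk => top_le_iff.1 fun a _ =>
      (mem_ann_iff_of_ne_zero hk.ne').2 ⟨?_, fun x => hE k x a w⟩⟩
    have hbot : S.jointEig V φ (μ + (sSup s + k.toNat : ℕ)) = ⊥ :=
      not_not.1 (notMem_of_csSup_lt (s := s) (by lia) hs)
    have hmem := S.lie_D_mem_jointEig hw k a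
    rwa [← Int.toNat_of_nonneg hk.le, Int.cast_natCast, add_assoc, ← Nat.cast_add, hbot,
      Submodule.mem_bot, Int.toNat_of_nonneg hk.le] at hmem
  · obtain ⟨m, hm, hmn⟩ := not_bddAbove_iff.1 hs n.toNat
    obtain ⟨w, hw, hw0⟩ := (Submodule.ne_bot_iff _).1 hm
    have hlow : ⁅S.D (-m) 1, w⁆ ∈ S.jointEig V φ μ := by
      simpa using S.lie_D_mem_jointEig hw (-m) 1
    exact ⟨_, w, hw, hw0, fun k hk => ann_eq_top_of_lie_D_neg (m := m) (by lia)
      (fun k hk => hn k (by lia) _ hlow) (h w) hk⟩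

variable [IsNoetherianRing A] [IsSimpleOrder (LieSubmodule ℂ L V)]
  [∀ φ μ, FiniteDimensional ℂ (S.jointEig V φ μ)]

theorem exists_annihilates_of_forall_pos_ann_eq_top (hE : ∀ n x a (u : V), ⁅S.E n x a, u⁆ = 0)
    {φ : Module.Dual ℂ S.H} {μ : ℂ} {v : V} (hv : v ∈ S.jointEig V φ μ) (hv0 : v ≠ 0)
    (hpos : ∀ k > 0, S.ann k v = ⊤) : ∃ R : Ideal A, IsCofiniteIdeal R ∧ S.Annihilates V R := by
  let Q : Ideal A := S.annIdeal (-1) (S.jointEig V φ μ) ⊓ S.annIdeal (-2) (S.jointEig V φ μ)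
  have hQ : IsCofiniteIdeal Q := (S.isCofiniteIdeal_annIdeal (by decide) φ μ).inf
    (S.isCofiniteIdeal_annIdeal (by decide) φ μ)
  have hD {k : ℤ} (hk : k ≠ 0) {a : A} (ha : a ∈ S.annIdeal k (S.jointEig V φ μ)) :
      ⁅S.D k a, v⁆ = 0 := ((mem_ann_iff_of_ne_zero hk).1 (mem_ann_of_mem_annIdeal ha hv)).1
  refine ⟨Q * Q, hQ.mul hQ, annihilates_mul_self_of_mem_ann hv0 fun k hk a ha => ?_⟩
  rcases lt_or_gt_of_ne hk with hneg | hpos'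
  · obtain ⟨j, rfl⟩ := Int.exists_eq_neg_ofNat hneg.le
    refine (mem_ann_iff_of_ne_zero hk).2 ⟨?_, fun x => hE _ x a v⟩
    exact lie_D_neg_eq_zero (Q := Q) hE hv0 hv.2 hpos (fun b hb => hD (by decide) hb.1)
      (fun b hb => hD (by decide) hb.2) (by lia) ha
  · exact hpos k hpos' ▸ Submodule.mem_top

theorem exists_annihilates_of_not_bddAbove (hnil : S.IsRootNilpotent V)
    (hK0 : ∀ v : V, ⁅S.K 1, v⁆ = 0) {φ : Module.Dual ℂ S.H} {μ : ℂ}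
    (hB : ¬ BddAbove (Set.range fun n : ℕ => Module.finrank ℂ (S.jointEig V φ (μ - n)))) :
    ∃ R : Ideal A, IsCofiniteIdeal R ∧ S.Annihilates V R := by
  obtain ⟨ν, u, hu, hu0, htop⟩ := exists_ne_zero_eventually_ann_eq_top hB
  have hE := lie_E_eq_zero_of_isRootNilpotent hnil hK0 hu hu0 htop
  have hloc (w : V) : ∀ᶠ k in atTop, S.ann k w = ⊤ := by
    have := eventually_subset_ann_of_ideal (S := S) (I := ⊤) hu0
      (htop.mono fun k hk => by simp [hk]) w
    simpa [Set.univ_subset_iff] using this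
  obtain ⟨ν, v, hv, hv0, hpos⟩ :=
    exists_forall_pos_ann_eq_top ((Submodule.ne_bot_iff _).2 ⟨u, hu, hu0⟩) hE hloc
  exact exists_annihilates_of_forall_pos_ann_eq_top hE hv hv0 hpos

end Finite

/-! ### The involution `t ↦ t⁻¹` -/

section Flip

variable {g A L : Type*} [LieRing g] [LieAlgebra ℂ g] [CommRing A] [Algebra ℂ A]
  [LieRing L] [LieAlgebra ℂ L] (S : LoopAffVir g A L)

/-- The realization of `𝔏(A)` obtained from the involution `t ↦ t⁻¹`, which maps `dₙ` to `-d₋ₙ`,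
`K` to `-K` and `C` to `-C`. It exchanges the two ends of the spectrum of `d₀`. -/
def flip : LoopAffVir g A L where
  H := S.H
  isCartan := S.isCartan
  form := S.form
  form_symm := S.form_symm
  form_nondeg := S.form_nondeg
  form_invariant := S.form_invariant
  rootSp := S.rootSp
  rootSp_def := S.rootSp_def
  Δplus := S.Δplus
  Δplus_root := S.Δplus_root
  Δplus_cover := S.Δplus_cover
  Δplus_disj := S.Δplus_disj
  E n := S.E (-n)
  D n := -S.D (-n)
  K := -S.K
  C := -S.C
  lie_EE n m x y a b := by
    simp only [S.lie_EE, neg_add, neg_inj, Int.cast_neg, LinearMap.neg_apply]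
    split_ifs <;> module
  lie_DE n m x a b := by
    rw [LinearMap.neg_apply, neg_lie, S.lie_DE, neg_add, Int.cast_neg, neg_smul, neg_neg]
  lie_DD n m a b := by
    simp only [LinearMap.neg_apply, neg_lie, lie_neg, neg_neg, S.lie_DD, neg_add,
      neg_eq_iff_eq_neg, Int.cast_neg]
    split_ifs <;> module
  K_central a z := by simp [S.K_central]
  C_central a z := by simp [S.C_central]
  span_top := by
    rw [eq_top_iff, ← S.span_top, Submodule.span_le]
    rintro z (((⟨n, x, a, rfl⟩ | ⟨n, a, rfl⟩) | ⟨a, rfl⟩) | ⟨a, rfl⟩)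
    · exact Submodule.subset_span (.inl (.inl (.inl ⟨-n, x, a, by simp⟩)))
    · exact Submodule.subset_span (.inl (.inl (.inr ⟨-n, -a, by simp⟩)))
    · exact Submodule.subset_span (.inl (.inr ⟨-a, by simp⟩))
    · exact Submodule.subset_span (.inr ⟨-a, by simp⟩)

variable {S} {V : Type*} [AddCommGroup V] [LieRingModule L V]

theorem annihilates_flip {R : Ideal A} : S.flip.Annihilates V R ↔ S.Annihilates V R := by
  simp only [Annihilates, flip, LinearMap.neg_apply, neg_lie, neg_eq_zero]
  exact forall₂_congr fun a _ => and_congr ((Equiv.neg ℤ).forall_congr fun _ => Iff.rfl)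
    (and_congr ((Equiv.neg ℤ).forall_congr fun _ => Iff.rfl) Iff.rfl)

variable [Module ℂ V] [LieModule ℂ L V]

theorem jointEig_flip (φ : Module.Dual ℂ S.H) (μ : ℂ) :
    S.flip.jointEig V φ μ = S.jointEig V φ (-μ) := by
  ext v
  simp only [mem_jointEig, flip, LinearMap.neg_apply, neg_lie, neg_zero, neg_smul,
    neg_eq_iff_eq_neg]

theorem IsRootNilpotent.flip (h : S.IsRootNilpotent V) : S.flip.IsRootNilpotent V :=
  fun α h0 hα x hx n => h α h0 hα x hx (-n)

end Flip

section Spectrum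

variable {g A L : Type*} [LieRing g] [LieAlgebra ℂ g] [FiniteDimensional ℂ g]
  [LieAlgebra.IsSimple ℂ g] [CommRing A] [Algebra ℂ A] [IsNoetherianRing A] [LieRing L]
  [LieAlgebra ℂ L] {S : LoopAffVir g A L}
  {V : Type*} [AddCommGroup V] [Module ℂ V] [LieRingModule L V] [LieModule ℂ L V]
  [IsSimpleOrder (LieSubmodule ℂ L V)] [∀ φ μ, FiniteDimensional ℂ (S.jointEig V φ μ)]

theorem exists_annihilates_of_not_bddAbove_add (hnil : S.IsRootNilpotent V)
    (hK0 : ∀ v : V, ⁅S.K 1, v⁆ = 0) {φ : Module.Dual ℂ S.H} {μ : ℂ}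
    (hB : ¬ BddAbove (Set.range fun n : ℕ => Module.finrank ℂ (S.jointEig V φ (μ + n)))) :
    ∃ R : Ideal A, IsCofiniteIdeal R ∧ S.Annihilates V R := by
  have hfin (φ : Module.Dual ℂ S.H) (μ : ℂ) : FiniteDimensional ℂ (S.flip.jointEig V φ μ) := by
    rw [jointEig_flip]
    infer_instance
  have : ∀ (φ : Module.Dual ℂ S.flip.H) (μ : ℂ), FiniteDimensional ℂ (S.flip.jointEig V φ μ) :=
    hfin
  have hflip : (fun n : ℕ => Module.finrank ℂ (S.flip.jointEig V φ (-μ - n))) =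
      fun n : ℕ => Module.finrank ℂ (S.jointEig V φ (μ + n)) := by
    funext n
    rw [jointEig_flip, neg_sub, sub_neg_eq_add, add_comm]
  obtain ⟨R, hR, hRV⟩ := exists_annihilates_of_not_bddAbove (S := S.flip) (V := V) (φ := φ)
    (μ := -μ) hnil.flip
    (fun v => by rw [show S.flip.K 1 = -S.K 1 from rfl, neg_lie, hK0, neg_zero])
    (by rwa [hflip])
  exact ⟨R, hR, annihilates_flip.1 hRV⟩

theorem exists_annihilates (hnil : S.IsRootNilpotent V) (hK0 : ∀ v : V, ⁅S.K 1, v⁆ = 0)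
    {φ : Module.Dual ℂ S.H} {μ : ℂ} (hne : S.jointEig V φ μ ≠ ⊥) :
    ∃ R : Ideal A, IsCofiniteIdeal R ∧ S.Annihilates V R := by
  by_cases! hbdd : ∀ φ : Module.Dual ℂ S.H,
    BddAbove (Set.range fun n : ℕ => Module.finrank ℂ (S.jointEig V φ (μ + n))) ∧
    BddAbove (Set.range fun n : ℕ => Module.finrank ℂ (S.jointEig V φ (μ - n)))
  · refine exists_annihilates_of_bddAbove hne fun φ =>
      ((hbdd φ).1.union (hbdd φ).2).mono ?_
    rintro - ⟨n, rfl⟩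
    obtain ⟨m, rfl | rfl⟩ := n.eq_nat_or_neg <;> beta_reduce
    exacts [.inl ⟨m, by rw [Int.cast_natCast]⟩,
      .inr ⟨m, by rw [Int.cast_neg, Int.cast_natCast, ← sub_eq_add_neg]⟩]
  · obtain ⟨φ, hφ⟩ := hbdd
    by_cases hpos : BddAbove (Set.range fun n : ℕ => Module.finrank ℂ (S.jointEig V φ (μ + n)))
    exacts [exists_annihilates_of_not_bddAbove hnil hK0 (hφ hpos),
      exists_annihilates_of_not_bddAbove_add hnil hK0 hpos]

end Spectrum

end LoopAffVir

theorem statement15_general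
    {g A L : Type*} [LieRing g] [LieAlgebra ℂ g] [FiniteDimensional ℂ g] [LieAlgebra.IsSimple ℂ g]
    [CommRing A] [Algebra ℂ A] [IsNoetherianRing A] [LieRing L] [LieAlgebra ℂ L]
    (S : LoopAffVir g A L)
    (V : Type*) [AddCommGroup V] [Module ℂ V] [LieRingModule L V] [LieModule ℂ L V]
    [IsSimpleOrder (LieSubmodule ℂ L V)] (hInt : S.IsIntegrable V)
    (hK0 : ∀ v : V, ⁅S.K 1, v⁆ = 0) :
    ∃ R : Ideal A, IsCofiniteIdeal R ∧ S.Annihilates V R := by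
  obtain ⟨hweight, hfin, hnil⟩ := hInt
  have := S.finiteDimensional_jointEig hweight hfin hK0
  have := (LieSubmodule.nontrivial_iff ℂ L V).1 inferInstance
  obtain ⟨⟨φ, μ⟩, hne⟩ := exists_ne_bot_of_iSup_eq_top (S.iSup_jointEig hweight)
  exact LoopAffVir.exists_annihilates hnil hK0 hne

/-- Proposition `p3`.  Let `V` be an irreducible integrable
`𝔏(A)`-module with finite dimensional weight spaces on which `K ⊗ 1` acts trivially, and
`M` its highest weight space.  Then there is a cofinite ideal `R` of `A` with
`(Vir ⊗ R) ⬝ M = 0`. -/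
theorem statement15
    {g A L : Type*} [LieRing g] [LieAlgebra ℂ g] [FiniteDimensional ℂ g]
    [LieAlgebra.IsSimple ℂ g]
    [CommRing A] [Algebra ℂ A] [Algebra.FiniteType ℂ A]
    [LieRing L] [LieAlgebra ℂ L]
    (S : LoopAffVir g A L)
    (V : Type*) [AddCommGroup V] [Module ℂ V] [LieRingModule L V] [LieModule ℂ L V]
    (hIrr : IsSimpleOrder (LieSubmodule ℂ L V))
    (hInt : S.IsIntegrable V)
    (hK0 : ∀ v : V, ⁅S.K 1, v⁆ = 0)
    :
    ∃ R : Ideal A, IsCofiniteIdeal R ∧ ∀ a ∈ R, ∀ v ∈ S.hwSpace V,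
      (∀ n : ℤ, ⁅S.D n a, v⁆ = 0) ∧ ⁅S.C a, v⁆ = 0 := by
  have := Algebra.FiniteType.isNoetherianRing ℂ A
  obtain ⟨R, hR, hRV⟩ := statement15_general S V hInt hK0
  exact ⟨R, hR, fun a ha v _ => ⟨fun n => (hRV a ha).2.1 n v, (hRV a ha).2.2.2 v⟩⟩
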